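/- Let R₀ > 0 and let F(x,y) = Σ_{m,n≥0} a_{m,n} x^m y^n be given by a power series converging absolutely on the polydisc {(x,y) ∈ ℂ² : |x| < R₀, |y| < R₀}. Suppose there are positive integers k, l with a_{k,0} ≠ 0, a_{0,l} ≠ 0, and a_{m,n} = 0 whenever l·m + k·n < k·l (i.e. the Newton polygon of F consists of the single segment joining (k,0) and (0,l); by a classical lemma this holds whenever F is irreducible in the ring of convergent power series). Then for every real c with 0 < c < 1/max(k,l) there exists R ∈ (0, R₀] such that K_0(R) < ∞ and lim_{t→0} K_t(R) = K_0(R). -/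

import Mathlib

open MeasureTheory
open scoped ENNReal

/-- The integral `K_t(R)` of `|F|^{-2c}` over the fiber
`U_t = {(x,y) : xy = t, |x| < R, |y| < R}` of `π(x,y) = xy`, with respect to the
volume induced by the Euclidean metric.  For `t ≠ 0` it equals
`∫_{|t|/R < |x| < R} (1 + |t|²/|x|⁴)·|F(x,t/x)|^{-2c} dλ(x)`, and for `t = 0` it is
`∫_{0 < |x| < R} |F(x,0)|^{-2c} dλ(x) + ∫_{0 < |y| < R} |F(0,y)|^{-2c} dλ(y)`. -/
noncomputable def fiberIntegral (F : ℂ → ℂ → ℂ) (c R : ℝ) (t : ℂ) : ℝ≥0∞ :=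
  if t = 0 then
    (∫⁻ x in {x : ℂ | 0 < ‖x‖ ∧ ‖x‖ < R}, ENNReal.ofReal (‖F x 0‖ ^ (-(2 * c)))) +
      (∫⁻ y in {y : ℂ | 0 < ‖y‖ ∧ ‖y‖ < R}, ENNReal.ofReal (‖F 0 y‖ ^ (-(2 * c))))
  else
    ∫⁻ x in {x : ℂ | ‖t‖ / R < ‖x‖ ∧ ‖x‖ < R},
      ENNReal.ofReal ((1 + ‖t‖ ^ 2 / ‖x‖ ^ 4) * ‖F x (t / x)‖ ^ (-(2 * c)))

/-!
Write `x = u^l ξ`, `y = u^k ξ⁻¹` and `t = xy = u^{k+l}`. As no exponent lies below the segment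
joining `(k,0)` and `(0,l)`, the series factors as `F(x,y) = u^{kl} G_u(ξ)`, where `G_u` is
holomorphic in `ξ ≠ 0` and `G_u → G_0` locally uniformly as `u → 0`. The limit `G_0` is, up to a
power of `ξ`, a polynomial with at most `k + 1` terms, so its zeros in `ξ ≠ 0` have order at most
`k`.

The fiber over `t` is cut into two pieces.

* Where one of `|x|^k` and `|y|^l` dominates, `|F|` is bounded below by a multiple of `|x|^k`.
  Since `ck < 1`, the function `|x|^{-2ck}` is integrable, and dominated convergence applies.
* On the remaining transition region `ξ` stays in a compact subset of `ξ ≠ 0`, and the integral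
  equals `|u|^{2l(1-ck)} ∫ |G_u(ξ)|^{-2c}`. The last factor stays bounded as `u → 0`: if `G_0`
  vanishes to order `j` at `z₀`, then the divided differences of `G_u` at `j + 1` points near `z₀`
  are bounded away from zero, so `G_u` cannot be small at `j + 1` points far from each other, and
  its sublevel sets are covered by `j` small discs. This bounds the integral as soon as `2cj < 2`.

The term `|t|²/|x|⁴` in the density is the Jacobian of `x ↦ t/x`: it carries the integral over the
projection of the fiber to the `y`-axis to the `x`-axis. The integral over the fiber is therefore a
sum of two integrals that are exchanged by swapping `x` and `y`.
-/

section

open Set Filter Topology Metric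

/-! ### Change of variables and layer-cake estimates -/

/-- The open annulus `r < |z| < s` centered at the origin of `ℂ`. -/
def openAnnulus (r s : ℝ) : Set ℂ := {z | r < ‖z‖ ∧ ‖z‖ < s}

theorem isOpen_openAnnulus (r s : ℝ) : IsOpen (openAnnulus r s) :=
  (isOpen_lt continuous_const continuous_norm).inter (isOpen_lt continuous_norm continuous_const)

theorem exists_subset_openAnnulus_of_isCompact {K : Set ℂ} (hK : IsCompact K) (hK₀ : (0 : ℂ) ∉ K) :
    ∃ P > 0, K ⊆ openAnnulus P⁻¹ P := by
  obtain ⟨P, hP⟩ := hK.exists_bound_of_continuousOn (f := fun z => max ‖z‖ ‖z⁻¹‖) <|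
    continuousOn_id.norm.sup (continuousOn_inv₀.mono (subset_compl_singleton_iff.2 hK₀)).norm
  refine ⟨max P 0 + 1, by positivity, fun z hz => ?_⟩
  have hz₀ : z ≠ 0 := ne_of_mem_of_not_mem hz hK₀
  have hbound : max ‖z‖ ‖z⁻¹‖ < max P 0 + 1 :=
    ((le_abs_self _).trans (hP z hz)).trans_lt ((le_max_left P 0).trans_lt (lt_add_one _))
  obtain ⟨hz', hzi⟩ := max_lt_iff.1 hbound
  rw [norm_inv] at hzi
  exact ⟨inv_lt_of_inv_lt₀ (norm_pos_iff.2 hz₀) hzi, hz'⟩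

theorem lintegral_image_eq_lintegral_norm_deriv_sq_mul {s : Set ℂ} (hs : MeasurableSet s)
    {f f' : ℂ → ℂ} (hf' : ∀ x ∈ s, HasDerivAt f (f' x) x) (hf : InjOn f s) (g : ℂ → ℝ≥0∞) :
    ∫⁻ x in f '' s, g x = ∫⁻ x in s, ENNReal.ofReal (‖f' x‖ ^ 2) * g (f x) := by
  rw [lintegral_image_eq_lintegral_abs_det_fderiv_mul volume hs
    (f' := fun x => (ContinuousLinearMap.toSpanSingleton ℂ (f' x)).restrictScalars ℝ)
    (fun x hx => ((hf' x hx).hasFDerivAt.restrictScalars ℝ).hasFDerivWithinAt) hf]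
  refine lintegral_congr fun x => ?_
  have hdet : ((ContinuousLinearMap.toSpanSingleton ℂ (f' x)).restrictScalars ℝ).det
      = ‖f' x‖ ^ 2 := by
    simp [ContinuousLinearMap.det, LinearMap.det_restrictScalars, Algebra.norm_complex_apply,
      Complex.normSq_eq_norm_sq]
  rw [hdet, abs_of_nonneg (by positivity)]

theorem setLIntegral_Ioc_rpow_sub_one {p b : ℝ} (hp : 0 < p) (hb : 0 ≤ b) :
    ∫⁻ t in Ioc 0 b, ENNReal.ofReal (t ^ (p - 1)) = ENNReal.ofReal (b ^ p / p) := by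
  have hint : IntegrableOn (fun t : ℝ => t ^ (p - 1)) (Ioc 0 b) :=
    (intervalIntegrable_iff_integrableOn_Ioc_of_le hb).1
      (intervalIntegral.intervalIntegrable_rpow' (by linarith))
  rw [← ofReal_integral_eq_lintegral_ofReal hint, ← intervalIntegral.integral_of_le hb,
    integral_rpow (Or.inl (by linarith)), sub_add_cancel, Real.zero_rpow hp.ne', sub_zero]
  exact (ae_restrict_iff' measurableSet_Ioc).2
    (Eventually.of_forall fun t ht => Real.rpow_nonneg ht.1.le _)

theorem setLIntegral_Ioi_rpow_neg_sub_one {r b : ℝ} (hr : 0 < r) (hb : 0 < b) :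
    ∫⁻ t in Ioi b, ENNReal.ofReal (t ^ (-r - 1)) = ENNReal.ofReal (b ^ (-r) / r) := by
  have hint := integrableOn_Ioi_rpow_of_lt (show -r - 1 < -1 by linarith) hb
  rw [← ofReal_integral_eq_lintegral_ofReal hint,
    integral_Ioi_rpow_of_lt (by linarith) hb, sub_add_cancel, neg_div_neg_eq]
  exact (ae_restrict_iff' measurableSet_Ioi).2
    (Eventually.of_forall fun t ht => Real.rpow_nonneg (hb.trans ht).le _)

theorem lintegral_rpow_le_of_meas_lt_le {α : Type*} [MeasurableSpace α] {μ : Measure α}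
    {g : α → ℝ} (hg₀ : 0 ≤ᵐ[μ] g) (hg : AEMeasurable g μ) {p q b : ℝ} (hp : 0 < p) (hpq : p < q)
    (hb : 0 < b) {A : ℝ≥0∞} (h : ∀ t, b < t → μ {x | t < g x} ≤ A * ENNReal.ofReal (t ^ (-q))) :
    ∫⁻ x, ENNReal.ofReal (g x ^ p) ∂μ ≤
      μ univ * ENNReal.ofReal (b ^ p) + A * ENNReal.ofReal (p / (q - p) * b ^ (p - q)) := by
  have hlow : ∫⁻ t in Ioc 0 b, μ {x | t < g x} * ENNReal.ofReal (t ^ (p - 1)) ≤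
      μ univ * ENNReal.ofReal (b ^ p / p) := by
    calc _ ≤ ∫⁻ t in Ioc 0 b, μ univ * ENNReal.ofReal (t ^ (p - 1)) := by
          gcongr; exact subset_univ _
      _ = _ := by
          rw [lintegral_const_mul _ (by fun_prop), setLIntegral_Ioc_rpow_sub_one hp hb.le]
  have hhigh : ∫⁻ t in Ioi b, μ {x | t < g x} * ENNReal.ofReal (t ^ (p - 1)) ≤
      A * ENNReal.ofReal (b ^ (p - q) / (q - p)) := by
    calc _ ≤ ∫⁻ t in Ioi b, A * ENNReal.ofReal (t ^ (-(q - p) - 1)) := by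
          refine setLIntegral_mono' measurableSet_Ioi fun t ht => ?_
          refine (mul_le_mul_left (h t ht) _).trans_eq ?_
          rw [mul_assoc, ← ENNReal.ofReal_mul (Real.rpow_nonneg (hb.trans ht).le _),
            ← Real.rpow_add (hb.trans ht)]
          ring_nf
      _ = _ := by
          rw [lintegral_const_mul _ (by fun_prop),
            setLIntegral_Ioi_rpow_neg_sub_one (by linarith) hb, neg_sub]
  calc ∫⁻ x, ENNReal.ofReal (g x ^ p) ∂μ = ENNReal.ofReal p *
        ∫⁻ t in Ioi 0, μ {x | t < g x} * ENNReal.ofReal (t ^ (p - 1)) :=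
        lintegral_rpow_eq_lintegral_meas_lt_mul μ hg₀ hg hp
    _ ≤ ENNReal.ofReal p * (μ univ * ENNReal.ofReal (b ^ p / p) +
        A * ENNReal.ofReal (b ^ (p - q) / (q - p))) := by
        rw [← Ioc_union_Ioi_eq_Ioi hb.le]
        gcongr
        exact (lintegral_union_le _ _ _).trans (add_le_add hlow hhigh)
    _ = _ := by
        rw [mul_add, mul_left_comm, mul_left_comm _ A, ← ENNReal.ofReal_mul hp.le,
          ← ENNReal.ofReal_mul hp.le, mul_div_cancel₀ _ hp.ne', mul_div_assoc',
          div_mul_eq_mul_div]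

/-! ### Divided differences and sublevel sets -/

section DividedDifference

variable {ι : Type*} [Fintype ι] [DecidableEq ι]

/-- The divided difference `f[v₀, …, v_j]` of `f` at the nodes `v`, used only for distinct nodes.
For holomorphic `f` it is a contour integral, hence stable under perturbation of `f` and `v`. -/
noncomputable def dividedDifference {K : Type*} [Field K] (f : K → K) (v : ι → K) : K :=
  ∑ i, Lagrange.nodalWeight Finset.univ v i * f (v i)

theorem inv_prod_sub_eq_sum_nodalWeight_mul_inv_sub {K : Type*} [Field K] [Nonempty ι]
    {v : ι → K} (hv : Function.Injective v) {x : K} (hx : ∀ i, x ≠ v i) :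
    (∏ i, (x - v i))⁻¹ = ∑ i, Lagrange.nodalWeight Finset.univ v i * (x - v i)⁻¹ := by
  have h := Lagrange.eval_interpolate_not_at_node (s := Finset.univ) (v := v) 1 fun i _ => hx i
  rw [Lagrange.interpolate_one hv.injOn Finset.univ_nonempty, Polynomial.eval_one,
    Lagrange.eval_nodal] at h
  exact inv_eq_of_mul_eq_one_right (by simpa using h.symm)

theorem circleIntegral_mul_inv_prod_sub [Nonempty ι] {f : ℂ → ℂ} {c : ℂ} {r : ℝ}
    (hf : DifferentiableOn ℂ f (closedBall c r)) {v : ι → ℂ} (hvr : ∀ i, v i ∈ ball c r)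
    (hv : Function.Injective v) :
    (∮ ζ in C(c, r), f ζ * (∏ i, (ζ - v i))⁻¹) =
      2 * Real.pi * Complex.I * dividedDifference f v := by
  have hr : 0 < r := dist_nonneg.trans_lt (hvr (Classical.arbitrary ι))
  have hne : ∀ ζ ∈ sphere c r, ∀ i, ζ ≠ v i := fun ζ hζ i h =>
    (mem_ball.1 (hvr i)).ne (h ▸ mem_sphere.1 hζ)
  have hint : ∀ i, CircleIntegrable
      (fun ζ => Lagrange.nodalWeight Finset.univ v i * ((ζ - v i)⁻¹ * f ζ)) c r := fun i =>
    ContinuousOn.circleIntegrable hr.le <| continuousOn_const.mul <|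
      ((continuousOn_id.sub continuousOn_const).inv₀ fun ζ hζ => sub_ne_zero.2 (hne ζ hζ i)).mul
        (hf.continuousOn.mono sphere_subset_closedBall)
  calc (∮ ζ in C(c, r), f ζ * (∏ i, (ζ - v i))⁻¹)
      = ∮ ζ in C(c, r), ∑ i, Lagrange.nodalWeight Finset.univ v i * ((ζ - v i)⁻¹ * f ζ) := by
        refine circleIntegral.integral_congr hr.le fun ζ hζ => ?_
        simp only [inv_prod_sub_eq_sum_nodalWeight_mul_inv_sub hv (hne ζ hζ), Finset.mul_sum]
        exact Finset.sum_congr rfl fun i _ => by ring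
    _ = ∑ i, ∮ ζ in C(c, r), Lagrange.nodalWeight Finset.univ v i * ((ζ - v i)⁻¹ * f ζ) :=
        circleIntegral.integral_fun_sum fun i _ => hint i
    _ = 2 * Real.pi * Complex.I * dividedDifference f v := by
        rw [dividedDifference, Finset.mul_sum]
        refine Finset.sum_congr rfl fun i _ => ?_
        have hcauchy := hf.circleIntegral_sub_inv_smul (hvr i)
        simp only [smul_eq_mul] at hcauchy
        rw [circleIntegral.integral_const_mul, hcauchy]
        ring

theorem norm_dividedDifference_lt {K : Type*} [NormedField K] [Nonempty ι] {f : K → K} {v : ι → K}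
    {s ε : ℝ} (hs : 0 < s) (hv : Pairwise fun i j => s ≤ dist (v i) (v j))
    (hf : ∀ i, ‖f (v i)‖ < ε) :
    ‖dividedDifference f v‖ < Fintype.card ι * (ε / s ^ (Fintype.card ι - 1)) := by
  have hweight : ∀ i, ‖Lagrange.nodalWeight Finset.univ v i‖ ≤ (s ^ (Fintype.card ι - 1))⁻¹ := by
    intro i
    calc ‖Lagrange.nodalWeight Finset.univ v i‖ = ∏ j ∈ Finset.univ.erase i, ‖v i - v j‖⁻¹ := by
          simp only [Lagrange.nodalWeight, norm_prod, norm_inv]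
      _ ≤ ∏ _j ∈ Finset.univ.erase i, s⁻¹ := by
          gcongr with j hj
          rw [← dist_eq_norm]
          exact hv (Finset.ne_of_mem_erase hj).symm
      _ = _ := by simp [Finset.card_erase_of_mem]
  calc ‖dividedDifference f v‖ ≤ ∑ i, ‖Lagrange.nodalWeight Finset.univ v i * f (v i)‖ :=
        norm_sum_le _ _
    _ < ∑ _i : ι, ε / s ^ (Fintype.card ι - 1) := by
        refine Finset.sum_lt_sum_of_nonempty Finset.univ_nonempty fun i _ => ?_
        rw [norm_mul, div_eq_inv_mul]
        exact mul_lt_mul' (hweight i) (hf i) (norm_nonneg _) (by positivity)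
    _ = _ := by simp

end DividedDifference

theorem exists_pairwise_le_dist_or_subset_iUnion_ball {α : Type*} [PseudoMetricSpace α]
    (E : Set α) (s : ℝ) (n : ℕ) :
    (∃ z : Fin (n + 1) → α, (∀ i, z i ∈ E) ∧ Pairwise fun i j => s ≤ dist (z i) (z j)) ∨
      ∃ C : Finset α, C.card ≤ n ∧ E ⊆ ⋃ c ∈ C, ball c s := by
  classical
  induction n with
  | zero =>
    rcases E.eq_empty_or_nonempty with rfl | ⟨x, hx⟩
    · exact Or.inr ⟨∅, by simp⟩
    · exact Or.inl ⟨fun _ => x, fun _ => hx, fun i j hij =>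
        absurd (Subsingleton.elim (α := Fin 1) i j) hij⟩
  | succ n ih =>
    rcases ih with ⟨z, hzE, hz⟩ | ⟨C, hC, hE⟩
    · by_cases hx : ∃ x ∈ E, ∀ i, s ≤ dist x (z i)
      · obtain ⟨x, hxE, hxz⟩ := hx
        refine Or.inl ⟨Fin.cons x z, Fin.cases hxE hzE, fun i j => ?_⟩
        refine Fin.cases (Fin.cases ?_ fun j _ => ?_) (fun i => Fin.cases ?_ fun j hij => ?_) i j
        · exact fun h => absurd rfl h
        · simpa using hxz j
        · simpa [dist_comm] using hxz i
        · simpa using hz fun h => hij (congrArg Fin.succ h)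
      · push Not at hx
        refine Or.inr ⟨Finset.univ.image z, Finset.card_image_le.trans (by simp), fun x hxE => ?_⟩
        simpa using hx x hxE
    · exact Or.inr ⟨C, hC.trans n.le_succ, hE⟩

theorem volume_norm_lt_le_of_le_norm_dividedDifference {j : ℕ} {δ : ℝ} {h : ℂ → ℂ} {B : Set ℂ}
    (hB : ∀ z : Fin (j + 1) → ℂ, (∀ i, z i ∈ B) → Function.Injective z →
      δ ≤ ‖dividedDifference h z‖) {s : ℝ} (hs : 0 < s) :
    volume (B ∩ {z | ‖h z‖ < δ / (j + 1) * s ^ j}) ≤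
      j * (ENNReal.ofReal s ^ 2 * NNReal.pi) := by
  -- `h` cannot be this small at `j + 1` points that are mutually `s`-separated.
  rcases exists_pairwise_le_dist_or_subset_iUnion_ball
    (B ∩ {z | ‖h z‖ < δ / (j + 1) * s ^ j}) s j with ⟨z, hz, hsep⟩ | ⟨C, hC, hcover⟩
  · have hinj : Function.Injective z := Function.injective_iff_pairwise_ne.2 fun i i' hii' =>
      dist_pos.1 (hs.trans_le (hsep hii'))
    refine absurd (hB z (fun i => (hz i).1) hinj) (not_le.2 ?_)
    refine (norm_dividedDifference_lt hs hsep fun i => (hz i).2).trans_eq ?_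
    simp only [Fintype.card_fin, Nat.cast_add, Nat.cast_one, Nat.add_sub_cancel]
    field_simp
  · calc _ ≤ ∑ c ∈ C, volume (ball c s) :=
          (measure_mono hcover).trans (measure_biUnion_finset_le _ _)
      _ = C.card * (ENNReal.ofReal s ^ 2 * NNReal.pi) := by simp [Complex.volume_ball]
      _ ≤ _ := by gcongr

/-! ### Semicontinuity of `∫ |f|^{-p}` -/

theorem tendstoLocallyUniformlyOn_of_continuousAt_uncurry {α X β : Type*} [TopologicalSpace α]
    [TopologicalSpace X] [UniformSpace β] {G : α → X → β} {v₀ : α} {s : Set X}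
    (hG : ∀ x ∈ s, ContinuousAt (Function.uncurry G) (v₀, x)) :
    TendstoLocallyUniformlyOn G (G v₀) (𝓝 v₀) s := by
  refine tendstoLocallyUniformlyOn_iff_forall_tendsto.2 fun x hx => ?_
  have hG₀ : ContinuousAt (G v₀) x :=
    ContinuousAt.comp (f := fun y => (v₀, y)) (hG x hx) (by fun_prop)
  have hpair : Tendsto (fun p : α × X => (G v₀ p.2, G p.1 p.2)) (𝓝 (v₀, x))
      (𝓝 (G v₀ x, G v₀ x)) :=
    (hG₀.tendsto.comp (continuous_snd.tendsto (v₀, x))).prodMk_nhds (hG x hx).tendsto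
  rw [nhds_prod_eq] at hpair
  exact (hpair.mono_left (prod_mono le_rfl nhdsWithin_le_nhds)).mono_right (nhds_le_uniformity _)

theorem tendsto_circleIntegral_mul_inv_prod_sub {α ι : Type*} [Fintype ι] {l : Filter α}
    [l.IsCountablyGenerated] {f : α → ℂ → ℂ} {f₀ : ℂ → ℂ} {c : ℂ} {r : ℝ} (hr : 0 ≤ r)
    (hf : ∀ᶠ i in l, ContinuousOn (f i) (sphere c r)) (hf₀ : ContinuousOn f₀ (sphere c r))
    (hlim : TendstoUniformlyOn f f₀ l (sphere c r)) {v₀ : ι → ℂ} (hv₀ : ∀ m, v₀ m ∉ sphere c r) :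
    Tendsto (fun p : α × (ι → ℂ) => ∮ ζ in C(c, r), f p.1 ζ * (∏ m, (ζ - p.2 m))⁻¹) (l ×ˢ 𝓝 v₀)
      (𝓝 (∮ ζ in C(c, r), f₀ ζ * (∏ m, (ζ - v₀ m))⁻¹)) := by
  have hne : ∀ ζ ∈ sphere c r, ∏ m, (ζ - v₀ m) ≠ 0 := fun ζ hζ =>
    Finset.prod_ne_zero_iff.2 fun m _ => sub_ne_zero.2 fun h => hv₀ m (h ▸ hζ)
  have hnodes : TendstoUniformlyOn (fun (v : ι → ℂ) ζ => (∏ m, (ζ - v m))⁻¹)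
      (fun ζ => (∏ m, (ζ - v₀ m))⁻¹) (𝓝 v₀) (sphere c r) := by
    refine (tendstoLocallyUniformlyOn_iff_tendstoUniformlyOn_of_compact (isCompact_sphere c r)).1 ?_
    refine tendstoLocallyUniformlyOn_of_continuousAt_uncurry fun ζ hζ => ?_
    exact ContinuousAt.inv₀ (by fun_prop) (hne ζ hζ)
  have hne' : ∀ᶠ v in 𝓝 v₀, ∀ ζ ∈ sphere c r, ∏ m, (ζ - v m) ≠ 0 :=
    (isCompact_sphere c r).eventually_forall_of_forall_eventually fun ζ hζ =>
      ContinuousAt.eventually_ne (g := fun p : (ι → ℂ) × ℂ => ∏ m, (p.2 - p.1 m))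
        (by fun_prop) (hne ζ hζ)
  refine TendstoUniformlyOn.tendsto_circleIntegral_of_continuousOn hr ?_ ?_
  · filter_upwards [hf.prod_mk hne'] with p hp
    exact hp.1.mul (ContinuousOn.inv₀ (by fun_prop) hp.2)
  · rw [← tendstoLocallyUniformlyOn_iff_tendstoUniformlyOn_of_compact (isCompact_sphere c r)]
    refine TendstoLocallyUniformlyOn.fun_mul₀ (F := fun p : α × (ι → ℂ) => f p.1)
      (G := fun (p : α × (ι → ℂ)) ζ => (∏ m, (ζ - p.2 m))⁻¹) ?_ ?_ hf₀
      (ContinuousOn.inv₀ (by fun_prop) hne)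
    · exact TendstoUniformlyOn.tendstoLocallyUniformlyOn fun u hu =>
        tendsto_fst.eventually (hlim u hu)
    · exact TendstoUniformlyOn.tendstoLocallyUniformlyOn fun u hu =>
        tendsto_snd.eventually (hnodes u hu)

theorem exists_circleIntegral_mul_inv_pow_eq {f : ℂ → ℂ} {z₀ : ℂ} (hf : AnalyticAt ℂ f z₀) {j : ℕ}
    (hj : analyticOrderAt f z₀ = j) :
    ∃ w ≠ 0, ∀ᶠ r in 𝓝[>] (0 : ℝ),
      (∮ ζ in C(z₀, r), f ζ * ((ζ - z₀) ^ (j + 1))⁻¹) = 2 * Real.pi * Complex.I * w := by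
  obtain ⟨g, hg, hg₀, hfg⟩ := (hf.analyticOrderAt_eq_natCast).1 hj
  obtain ⟨ε, hε, hball⟩ := Metric.eventually_nhds_iff_ball.1 (hfg.and hg.eventually_analyticAt)
  refine ⟨g z₀, hg₀, ?_⟩
  filter_upwards [Ioo_mem_nhdsGT hε] with r hr
  have hsub : closedBall z₀ r ⊆ ball z₀ ε := closedBall_subset_ball hr.2
  have hgd : DifferentiableOn ℂ g (closedBall z₀ r) := fun ζ hζ =>
    (hball ζ (hsub hζ)).2.differentiableAt.differentiableWithinAt
  have hcauchy := hgd.circleIntegral_sub_inv_smul (mem_ball_self hr.1)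
  simp only [smul_eq_mul] at hcauchy
  rw [← hcauchy]
  refine circleIntegral.integral_congr hr.1.le fun ζ hζ => ?_
  have hζ₀ : ζ - z₀ ≠ 0 := sub_ne_zero.2 (ne_of_mem_sphere hζ hr.1.ne')
  simp only [(hball ζ (hsub (sphere_subset_closedBall hζ))).1, smul_eq_mul]
  field_simp
  ring

theorem eventually_le_norm_dividedDifference {α : Type*} {l : Filter α} [l.IsCountablyGenerated]
    [l.NeBot] {f : α → ℂ → ℂ} {f₀ : ℂ → ℂ} {U : Set ℂ} (hU : IsOpen U)
    (hf : ∀ᶠ i in l, DifferentiableOn ℂ (f i) U) (hlim : TendstoLocallyUniformlyOn f f₀ l U)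
    {z₀ : ℂ} (hz₀ : z₀ ∈ U) {j : ℕ} (hj : analyticOrderAt f₀ z₀ = j) :
    ∃ δ > 0, ∃ ρ > 0, ∀ᶠ i in l, ∀ z : Fin (j + 1) → ℂ, (∀ m, z m ∈ ball z₀ ρ) →
      Function.Injective z → δ ≤ ‖dividedDifference (f i) z‖ := by
  have hf₀ : DifferentiableOn ℂ f₀ U := hlim.differentiableOn hf hU
  obtain ⟨w, hw, hr⟩ := exists_circleIntegral_mul_inv_pow_eq
    (hf₀.analyticAt (hU.mem_nhds hz₀)) hj
  obtain ⟨R, hR, hRU⟩ := Metric.isOpen_iff.1 hU z₀ hz₀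
  obtain ⟨r, hint, hr₀, hrR⟩ := (hr.and (Ioo_mem_nhdsGT hR)).exists
  have hrU : closedBall z₀ r ⊆ U := (closedBall_subset_ball hrR).trans hRU
  have hsU : sphere z₀ r ⊆ U := sphere_subset_closedBall.trans hrU
  have hlim' := tendsto_circleIntegral_mul_inv_prod_sub (v₀ := fun _ : Fin (j + 1) => z₀) hr₀.le
    (hf.mono fun i hi => hi.continuousOn.mono hsU) (hf₀.continuousOn.mono hsU)
    ((tendstoLocallyUniformlyOn_iff_tendstoUniformlyOn_of_compact (isCompact_sphere z₀ r)).1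
      (hlim.mono hsU)) (fun _ => by simp [hr₀.ne])
  simp only [Finset.prod_const, Finset.card_univ, Fintype.card_fin, hint] at hlim'
  have h2π : ‖(2 * Real.pi * Complex.I : ℂ)‖ = 2 * Real.pi := by simp [abs_of_pos Real.pi_pos]
  have hbound : ∀ᶠ p in l ×ˢ 𝓝 fun _ : Fin (j + 1) => z₀, 2 * Real.pi * (‖w‖ / 2) <
      ‖∮ ζ in C(z₀, r), f p.1 ζ * (∏ m, (ζ - p.2 m))⁻¹‖ := by
    refine hlim'.norm.eventually_const_lt ?_
    have hw' : 0 < ‖w‖ := norm_pos_iff.2 hw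
    rw [norm_mul, h2π]
    gcongr
    linarith
  obtain ⟨A, hA, B, hB, hAB⟩ := eventually_prod_iff.1 hbound
  obtain ⟨ε, hε, hεB⟩ := Metric.eventually_nhds_iff.1 hB
  refine ⟨‖w‖ / 2, half_pos (norm_pos_iff.2 hw), min ε r, lt_min hε hr₀, ?_⟩
  filter_upwards [hA, hf] with i hiA hi z hz hinj
  have hzB : B z := hεB ((dist_pi_lt_iff hε).2 fun m => (hz m).trans_le (min_le_left _ _))
  have hlt := hAB hiA hzB
  rw [circleIntegral_mul_inv_prod_sub (hi.mono hrU)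
    (fun m => ball_subset_ball (min_le_right _ _) (hz m)) hinj, norm_mul] at hlt
  rw [h2π] at hlt
  exact (lt_of_mul_lt_mul_left hlt (by positivity)).le

theorem volume_lt_inv_norm_le_of_le_norm_dividedDifference {B : Set ℂ} {h : ℂ → ℂ} {j : ℕ} {δ : ℝ}
    (hδ : 0 < δ)
    (hB : ∀ z : Fin (j + 1) → ℂ, (∀ m, z m ∈ B) → Function.Injective z →
      δ ≤ ‖dividedDifference h z‖) {q t : ℝ} (hqj : q * j ≤ 2) (ht : (δ / (j + 1))⁻¹ < t) :
    volume (B ∩ {z | t < ‖h z‖⁻¹}) ≤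
      j * NNReal.pi * ENNReal.ofReal ((δ / (j + 1)) ^ (-q)) * ENNReal.ofReal (t ^ (-q)) := by
  set κ := δ / (j + 1)
  have hκ : 0 < κ := by positivity
  have ht₀ : 0 < t := (inv_pos.2 hκ).trans ht
  have hκt : 1 ≤ κ * t := by rw [← inv_mul_le_iff₀ hκ, mul_one]; exact ht.le
  set s := (κ * t) ^ (-(q / 2)) with hs
  have hs₀ : 0 < s := by positivity
  have hts : t⁻¹ ≤ κ * s ^ j := by
    calc t⁻¹ = κ * (κ * t) ^ (-1 : ℝ) := by rw [Real.rpow_neg_one]; field_simp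
      _ ≤ κ * (κ * t) ^ (-(q / 2) * j) := by gcongr; linarith
      _ = κ * s ^ j := by rw [Real.rpow_mul_natCast (by positivity)]
  calc volume (B ∩ {z | t < ‖h z‖⁻¹}) ≤ volume (B ∩ {z | ‖h z‖ < κ * s ^ j}) := by
        refine measure_mono (inter_subset_inter_right B fun z hz => ?_)
        have hz₀ : 0 < ‖h z‖ := inv_pos.1 (ht₀.trans hz)
        exact ((lt_inv_comm₀ ht₀ hz₀).1 hz).trans_le hts
    _ ≤ j * (ENNReal.ofReal s ^ 2 * NNReal.pi) :=
        volume_norm_lt_le_of_le_norm_dividedDifference hB hs₀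
    _ = _ := by
        have hs2 : s ^ 2 = κ ^ (-q) * t ^ (-q) := by
          rw [← Real.mul_rpow hκ.le ht₀.le, hs, ← Real.rpow_mul_natCast (by positivity)]
          congr 1
          push_cast
          ring
        rw [← ENNReal.ofReal_pow hs₀.le, hs2, ENNReal.ofReal_mul (by positivity)]
        ring

theorem setLIntegral_norm_rpow_neg_le_of_le_norm_dividedDifference {B : Set ℂ}
    (hBm : MeasurableSet B) {h : ℂ → ℂ} (hh : ContinuousOn h B) {j : ℕ} {δ : ℝ} (hδ : 0 < δ)
    (hB : ∀ z : Fin (j + 1) → ℂ, (∀ m, z m ∈ B) → Function.Injective z →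
      δ ≤ ‖dividedDifference h z‖) {p q : ℝ} (hp : 0 < p) (hpq : p < q) (hqj : q * j ≤ 2) :
    ∫⁻ z in B, ENNReal.ofReal (‖h z‖ ^ (-p)) ≤
      volume B * ENNReal.ofReal ((δ / (j + 1))⁻¹ ^ p) +
        j * NNReal.pi * ENNReal.ofReal ((δ / (j + 1)) ^ (-q)) *
          ENNReal.ofReal (p / (q - p) * (δ / (j + 1))⁻¹ ^ (p - q)) := by
  have hmeas : AEMeasurable (fun z => ‖h z‖⁻¹) (volume.restrict B) :=
    (hh.aestronglyMeasurable hBm).norm.aemeasurable.inv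
  simp only [Real.rpow_neg (norm_nonneg _), ← Real.inv_rpow (norm_nonneg _)]
  rw [← Measure.restrict_apply_univ (μ := volume) B]
  refine lintegral_rpow_le_of_meas_lt_le (Eventually.of_forall fun z => by positivity) hmeas hp hpq
    (by positivity) fun t ht => ?_
  rw [Measure.restrict_apply₀ (nullMeasurableSet_lt aemeasurable_const hmeas), inter_comm]
  exact volume_lt_inv_norm_le_of_le_norm_dividedDifference hδ hB hqj ht

theorem exists_ball_eventually_setLIntegral_norm_rpow_neg_le {α : Type*} {l : Filter α}
    [l.IsCountablyGenerated] [l.NeBot] {f : α → ℂ → ℂ} {f₀ : ℂ → ℂ} {U : Set ℂ} (hU : IsOpen U)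
    (hf : ∀ᶠ i in l, DifferentiableOn ℂ (f i) U) (hlim : TendstoLocallyUniformlyOn f f₀ l U)
    {z₀ : ℂ} (hz₀ : z₀ ∈ U) {p : ℝ} (hp : 0 < p) {j : ℕ} (hj : analyticOrderAt f₀ z₀ = j)
    (hpj : p * j < 2) :
    ∃ ρ > 0, ∃ M ≠ (⊤ : ℝ≥0∞), ∀ᶠ i in l,
      ∫⁻ z in ball z₀ ρ, ENNReal.ofReal (‖f i z‖ ^ (-p)) ≤ M := by
  obtain ⟨q, hqj, hpq⟩ : ∃ q, q * (j : ℝ) < 2 ∧ p < q :=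
    ((((continuous_mul_const (j : ℝ)).tendsto p).mono_left
      nhdsWithin_le_nhds).eventually_lt_const hpj |>.and self_mem_nhdsWithin).exists (f := 𝓝[>] p)
  obtain ⟨δ, hδ, ρ, hρ, hdd⟩ := eventually_le_norm_dividedDifference hU hf hlim hz₀ hj
  obtain ⟨R, hR, hRU⟩ := Metric.isOpen_iff.1 hU z₀ hz₀
  refine ⟨min ρ R, lt_min hρ hR, ?bound, ?finite, ?le⟩
  case le =>
    filter_upwards [hf, hdd] with i hi hddi
    exact setLIntegral_norm_rpow_neg_le_of_le_norm_dividedDifference measurableSet_ball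
      (hi.continuousOn.mono ((ball_subset_ball (min_le_right _ _)).trans hRU)) hδ
      (fun z hz => hddi z fun m => ball_subset_ball (min_le_left _ _) (hz m)) hp hpq hqj.le
  case finite => finiteness

theorem exists_eventually_setLIntegral_norm_rpow_neg_le {α : Type*} {l : Filter α}
    [l.IsCountablyGenerated] [l.NeBot] {f : α → ℂ → ℂ} {f₀ : ℂ → ℂ} {U K : Set ℂ} (hU : IsOpen U)
    (hf : ∀ᶠ i in l, DifferentiableOn ℂ (f i) U) (hlim : TendstoLocallyUniformlyOn f f₀ l U)
    (hK : IsCompact K) (hKU : K ⊆ U) {p : ℝ} (hp : 0 < p)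
    (hord : ∀ z ∈ K, ∃ j : ℕ, analyticOrderAt f₀ z = j ∧ p * j < 2) :
    ∃ M ≠ (⊤ : ℝ≥0∞), ∀ᶠ i in l, ∫⁻ z in K, ENNReal.ofReal (‖f i z‖ ^ (-p)) ≤ M := by
  refine hK.induction_on (p := fun s => ∃ M ≠ (⊤ : ℝ≥0∞), ∀ᶠ i in l,
    ∫⁻ z in s, ENNReal.ofReal (‖f i z‖ ^ (-p)) ≤ M) ⟨0, by simp⟩ ?_ ?_ fun z hz => ?_
  · rintro s t hst ⟨M, hM, h⟩
    exact ⟨M, hM, h.mono fun i hi => (lintegral_mono_set hst).trans hi⟩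
  · rintro s t ⟨M, hM, h⟩ ⟨N, hN, h'⟩
    refine ⟨M + N, ENNReal.add_ne_top.2 ⟨hM, hN⟩, ?_⟩
    filter_upwards [h, h'] with i hi hi'
    exact (lintegral_union_le _ _ _).trans (add_le_add hi hi')
  · obtain ⟨j, hj, hpj⟩ := hord z hz
    obtain ⟨ρ, hρ, hM⟩ :=
      exists_ball_eventually_setLIntegral_norm_rpow_neg_le hU hf hlim (hKU hz) hp hj hpj
    exact ⟨ball z ρ, mem_nhdsWithin_of_mem_nhds (ball_mem_nhds z hρ), hM⟩

/-! ### Vanishing orders of sparse polynomials -/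

theorem eq_zero_of_X_sub_C_pow_dvd_of_card_support_le {K : Type*} [Field K] [CharZero K] {x : K}
    (hx : x ≠ 0) {n : ℕ} {f : Polynomial K} (hdvd : (Polynomial.X - Polynomial.C x) ^ n ∣ f)
    (hcard : f.support.card ≤ n) : f = 0 := by
  induction n generalizing f with
  | zero => simpa using hcard
  | succ n ih =>
    by_contra hf
    obtain ⟨d, hd⟩ := Polynomial.nonempty_support_iff.2 hf
    -- The Euler operator `f ↦ X f' - d f` kills the monomial `X ^ d` and lowers the order by one.
    set g := Polynomial.X * Polynomial.derivative f - Polynomial.C (d : K) * f with hg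
    have hcoeff : ∀ m, g.coeff m = ((m : K) - d) * f.coeff m := by
      intro m
      cases m with
      | zero => simp [hg]
      | succ m =>
        simp only [hg, Polynomial.coeff_sub, Polynomial.coeff_X_mul, Polynomial.coeff_derivative,
          Polynomial.coeff_C_mul]
        push_cast
        ring
    have hsupp : g.support ⊆ f.support.erase d := fun m hm => by
      rw [Polynomial.mem_support_iff, hcoeff] at hm
      exact Finset.mem_erase.2 ⟨fun h => hm (by simp [h]),
        Polynomial.mem_support_iff.2 (right_ne_zero_of_mul hm)⟩
    have hgdvd : (Polynomial.X - Polynomial.C x) ^ n ∣ g :=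
      dvd_sub ((Polynomial.pow_sub_one_dvd_derivative_of_pow_dvd hdvd).mul_left _)
        (((pow_dvd_pow _ n.le_succ).trans hdvd).mul_left _)
    have hgcard : g.support.card ≤ n := by
      have := Finset.card_le_card hsupp
      rw [Finset.card_erase_of_mem hd] at this
      omega
    have hg₀ : g = 0 := ih hgdvd hgcard
    have hsingle : f = Polynomial.monomial d (f.coeff d) := by
      ext m
      rw [Polynomial.coeff_monomial]
      split_ifs with h
      · rw [h]
      · have := hcoeff m
        rw [hg₀, Polynomial.coeff_zero, zero_eq_mul, sub_eq_zero, Nat.cast_inj] at this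
        exact this.resolve_left (Ne.symm h)
    have hroot : f.eval x = 0 := Polynomial.dvd_iff_isRoot.1
      ((dvd_pow_self _ n.succ_ne_zero).trans hdvd)
    rw [hsingle, Polynomial.eval_monomial] at hroot
    exact mul_ne_zero (Polynomial.mem_support_iff.1 hd) (pow_ne_zero d hx) hroot

theorem rootMultiplicity_lt_card_support {K : Type*} [Field K] [CharZero K] {x : K} (hx : x ≠ 0)
    {f : Polynomial K} (hf : f ≠ 0) : f.rootMultiplicity x < f.support.card := by
  by_contra! hle
  exact hf (eq_zero_of_X_sub_C_pow_dvd_of_card_support_le hx (f.pow_rootMultiplicity_dvd x) hle)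

theorem analyticOrderAt_polynomial_eval {𝕜 : Type*} [NontriviallyNormedField 𝕜]
    {f : Polynomial 𝕜} (hf : f ≠ 0) (x : 𝕜) :
    analyticOrderAt (fun y => f.eval y) x = f.rootMultiplicity x := by
  obtain ⟨g, hfg, hg⟩ := f.exists_eq_pow_rootMultiplicity_mul_and_not_dvd hf x
  refine ((AnalyticOnNhd.eval_polynomial f) x trivial).analyticOrderAt_eq_natCast.2
    ⟨fun y => g.eval y, AnalyticOnNhd.eval_polynomial g x trivial,
      fun h => hg (Polynomial.dvd_iff_isRoot.2 h), Eventually.of_forall fun y => ?_⟩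
  conv_lhs => rw [hfg]
  simp

/-! ### Rescaling along the Newton segment -/

/-- `F(x,y) = Σ a_{m,n} x^m y^n` on the polydisc `|x|, |y| < R`; the sum is over unordered pairs of
exponents, so the convergence is absolute. -/
def HasDoubleSeriesOn (F : ℂ → ℂ → ℂ) (a : ℕ → ℕ → ℂ) (R : ℝ) : Prop :=
  ∀ x y, ‖x‖ < R → ‖y‖ < R → HasSum (fun mn : ℕ × ℕ => a mn.1 mn.2 * x ^ mn.1 * y ^ mn.2) (F x y)

/-- The Newton polygon of `Σ a_{m,n} x^m y^n` is the segment joining `(k,0)` and `(0,l)`. -/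
structure HasNewtonSegment (a : ℕ → ℕ → ℂ) (k l : ℕ) : Prop where
  pos_left : 0 < k
  pos_right : 0 < l
  left_ne_zero : a k 0 ≠ 0
  right_ne_zero : a 0 l ≠ 0
  eq_zero_of_lt : ∀ {m n : ℕ}, l * m + k * n < k * l → a m n = 0

/-- The series obtained from `Σ a_{m,n} x^m y^n` by substituting `x = u^l p`, `y = u^k q` and
dividing by `u^{kl}`. The subtraction in the exponent truncates only below the Newton segment,
where `a` is assumed to vanish. -/
noncomputable def rescaledSeries (a : ℕ → ℕ → ℂ) (k l : ℕ) (u p q : ℂ) : ℂ :=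
  ∑' mn : ℕ × ℕ, a mn.1 mn.2 * u ^ (l * mn.1 + k * mn.2 - k * l) * p ^ mn.1 * q ^ mn.2

variable {F : ℂ → ℂ → ℂ} {a : ℕ → ℕ → ℂ} {R : ℝ} {k l : ℕ}

theorem HasDoubleSeriesOn.swap (hF : HasDoubleSeriesOn F a R) :
    HasDoubleSeriesOn (Function.swap F) (Function.swap a) R := fun x y hx hy => by
  refine ((Equiv.prodComm ℕ ℕ).hasSum_iff.2 (hF y x hy hx)).congr_fun fun mn => ?_
  simp [Function.swap, mul_right_comm]

theorem HasDoubleSeriesOn.mono {R' : ℝ} (hF : HasDoubleSeriesOn F a R) (hR' : R' ≤ R) :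
    HasDoubleSeriesOn F a R' :=
  fun x y hx hy => hF x y (hx.trans_le hR') (hy.trans_le hR')

theorem HasNewtonSegment.swap (ha : HasNewtonSegment a k l) :
    HasNewtonSegment (Function.swap a) l k where
  pos_left := ha.pos_right
  pos_right := ha.pos_left
  left_ne_zero := ha.right_ne_zero
  right_ne_zero := ha.left_ne_zero
  eq_zero_of_lt hmn := ha.eq_zero_of_lt (by linarith)

theorem HasDoubleSeriesOn.continuousAt (hF : HasDoubleSeriesOn F a R) {x y : ℂ} (hx : ‖x‖ < R)
    (hy : ‖y‖ < R) : ContinuousAt (Function.uncurry F) (x, y) := by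
  obtain ⟨r, hr, hrR⟩ := exists_between (max_lt hx hy)
  obtain ⟨hxr, hyr⟩ := max_lt_iff.1 hr
  have hr₀ : 0 ≤ r := (norm_nonneg x).trans hxr.le
  have hrn : ‖(r : ℂ)‖ = r := by simp [abs_of_nonneg hr₀]
  have hsum := (hF r r (hrn.trans_lt hrR) (hrn.trans_lt hrR)).summable.norm
  have hcont : ContinuousOn (Function.uncurry F) (ball 0 r ×ˢ ball 0 r) := by
    refine ContinuousOn.congr (continuousOn_tsum (f := fun (mn : ℕ × ℕ) (v : ℂ × ℂ) =>
      a mn.1 mn.2 * v.1 ^ mn.1 * v.2 ^ mn.2) (fun mn => by fun_prop) hsum fun mn v hv => ?_)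
      fun v hv => ?_
    · simp only [mem_prod, mem_ball_zero_iff] at hv
      simp only [norm_mul, norm_pow, hrn]
      gcongr
      exacts [hv.1.le, hv.2.le]
    · simp only [mem_prod, mem_ball_zero_iff] at hv
      exact (hF v.1 v.2 (hv.1.trans hrR) (hv.2.trans hrR)).tsum_eq.symm
  exact hcont.continuousAt ((isOpen_ball.prod isOpen_ball).mem_nhds (by simp [hxr, hyr]))

theorem HasNewtonSegment.mul_pow_eq (ha : HasNewtonSegment a k l) (u p q : ℂ) (m n : ℕ) :
    a m n * (u ^ l * p) ^ m * (u ^ k * q) ^ n =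
      u ^ (k * l) * (a m n * u ^ (l * m + k * n - k * l) * p ^ m * q ^ n) := by
  by_cases hlt : l * m + k * n < k * l
  · simp [ha.eq_zero_of_lt hlt]
  · obtain ⟨e, he⟩ := Nat.exists_eq_add_of_le (not_lt.1 hlt)
    have hexp : u ^ (l * m) * u ^ (k * n) = u ^ (k * l) * u ^ e := by rw [← pow_add, he, pow_add]
    rw [he, Nat.add_sub_cancel_left, mul_pow, mul_pow, ← pow_mul, ← pow_mul]
    linear_combination (a m n * p ^ m * q ^ n) * hexp

theorem HasDoubleSeriesOn.eq_pow_mul_rescaledSeries (hF : HasDoubleSeriesOn F a R)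
    (ha : HasNewtonSegment a k l) {u p q : ℂ} (hp : ‖u ^ l * p‖ < R) (hq : ‖u ^ k * q‖ < R) :
    F (u ^ l * p) (u ^ k * q) = u ^ (k * l) * rescaledSeries a k l u p q := by
  rw [← (hF _ _ hp hq).tsum_eq, rescaledSeries, ← tsum_mul_left]
  exact tsum_congr fun mn => ha.mul_pow_eq u p q mn.1 mn.2

theorem eventually_norm_pow_mul_lt {n : ℕ} (hn : n ≠ 0) (P : ℝ) {R : ℝ} (hR : 0 < R) :
    ∀ᶠ u in 𝓝 (0 : ℂ), ‖u‖ ^ n * P < R := by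
  refine ContinuousAt.eventually_lt (by fun_prop) continuousAt_const ?_
  simpa [hn] using hR

theorem HasDoubleSeriesOn.exists_summable_eventually_norm_rescaledSeries_term_le
    (hF : HasDoubleSeriesOn F a R) (hR : 0 < R) (ha : HasNewtonSegment a k l) {P : ℝ} (hP : 0 ≤ P) :
    ∃ w : ℕ × ℕ → ℝ, Summable w ∧ ∀ᶠ u in 𝓝 (0 : ℂ), ∀ p q : ℂ, ‖p‖ ≤ P → ‖q‖ ≤ P →
      ∀ mn : ℕ × ℕ,
        ‖a mn.1 mn.2 * u ^ (l * mn.1 + k * mn.2 - k * l) * p ^ mn.1 * q ^ mn.2‖ ≤ w mn := by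
  obtain ⟨u₀, ⟨hl, hk⟩, hu₀⟩ := (((eventually_norm_pow_mul_lt ha.pos_right.ne' P hR).and
    (eventually_norm_pow_mul_lt ha.pos_left.ne' P hR)).filter_mono nhdsWithin_le_nhds |>.and
    (self_mem_nhdsWithin (s := {0}ᶜ))).exists
  have hPn : ‖(P : ℂ)‖ = P := by simp [abs_of_nonneg hP]
  have hsum := (hF (u₀ ^ l * P) (u₀ ^ k * P) (by simpa [abs_of_nonneg hP] using hl)
    (by simpa [abs_of_nonneg hP] using hk)).summable
  simp only [ha.mul_pow_eq] at hsum
  refine ⟨_, ((summable_mul_left_iff (pow_ne_zero _ hu₀)).1 hsum).norm, ?_⟩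
  filter_upwards [ball_mem_nhds 0 (norm_pos_iff.2 hu₀)] with u hu p q hp hq mn
  have huu₀ : ‖u‖ ≤ ‖u₀‖ := (mem_ball_zero_iff.1 hu).le
  simp only [norm_mul, norm_pow, hPn]
  gcongr

theorem HasDoubleSeriesOn.continuousAt_rescaledSeries (hF : HasDoubleSeriesOn F a R) (hR : 0 < R)
    (ha : HasNewtonSegment a k l) (p q : ℂ) :
    ContinuousAt (fun v : ℂ × ℂ × ℂ => rescaledSeries a k l v.1 v.2.1 v.2.2) (0, p, q) := by
  obtain ⟨P, hP⟩ := exists_gt (max ‖p‖ ‖q‖)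
  obtain ⟨hp, hq⟩ := max_lt_iff.1 hP
  obtain ⟨w, hw, hbound⟩ := hF.exists_summable_eventually_norm_rescaledSeries_term_le hR ha
    ((norm_nonneg p).trans hp.le)
  refine (continuousOn_tsum (s := {v : ℂ × ℂ × ℂ | ∀ mn : ℕ × ℕ, _ ≤ w mn})
    (fun mn => by fun_prop) hw fun mn v hv => hv mn).continuousAt ?_
  have hp' : ∀ᶠ p' in 𝓝 p, ‖p'‖ ≤ P := (continuous_norm.tendsto p).eventually_le_const hp
  have hq' : ∀ᶠ q' in 𝓝 q, ‖q'‖ ≤ P := (continuous_norm.tendsto q).eventually_le_const hq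
  filter_upwards [hbound.prod_nhds (hp'.prod_nhds hq')] with v hv
  exact hv.1 v.2.1 v.2.2 hv.2.1 hv.2.2

theorem HasDoubleSeriesOn.eventually_differentiableOn_rescaledSeries (hF : HasDoubleSeriesOn F a R)
    (hR : 0 < R) (ha : HasNewtonSegment a k l) {P : ℝ} (hP : 0 < P) :
    ∀ᶠ u in 𝓝 (0 : ℂ), DifferentiableOn ℂ (fun ξ => rescaledSeries a k l u ξ ξ⁻¹)
      (openAnnulus P⁻¹ P) := by
  obtain ⟨w, hw, hbound⟩ := hF.exists_summable_eventually_norm_rescaledSeries_term_le hR ha hP.le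
  filter_upwards [hbound] with u hu
  refine Complex.differentiableOn_tsum_of_summable_norm hw (fun mn ξ hξ => ?_)
    (isOpen_openAnnulus P⁻¹ P) fun mn ξ hξ => hu ξ ξ⁻¹ hξ.2.le ?_ mn
  · have hξ₀ : ξ ≠ 0 := norm_pos_iff.1 ((inv_pos.2 hP).trans hξ.1)
    fun_prop (disch := assumption)
  · rw [norm_inv]
    exact inv_le_of_inv_le₀ hP hξ.1.le

theorem HasDoubleSeriesOn.tendstoLocallyUniformlyOn_rescaledSeries (hF : HasDoubleSeriesOn F a R)
    (hR : 0 < R) (ha : HasNewtonSegment a k l) :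
    TendstoLocallyUniformlyOn (fun u ξ => rescaledSeries a k l u ξ ξ⁻¹)
      (fun ξ => rescaledSeries a k l 0 ξ ξ⁻¹) (𝓝 0) {0}ᶜ := by
  refine tendstoLocallyUniformlyOn_of_continuousAt_uncurry fun ξ hξ => ?_
  have hξ₀ : ξ ≠ 0 := hξ
  exact ContinuousAt.comp (f := fun v : ℂ × ℂ => (v.1, v.2, v.2⁻¹))
    (g := fun v : ℂ × ℂ × ℂ => rescaledSeries a k l v.1 v.2.1 v.2.2)
    (hF.continuousAt_rescaledSeries hR ha ξ ξ⁻¹) (by fun_prop (disch := assumption))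

/-- The exponents on the segment joining `(k,0)` and `(0,l)`. -/
def newtonEdge (k l : ℕ) : Finset (ℕ × ℕ) :=
  {mn ∈ Finset.range (k + 1) ×ˢ Finset.range (l + 1) | l * mn.1 + k * mn.2 = k * l}

/-- The edge polynomial `ξ^l Σ a_{m,n} ξ^{m-n}`, the sum running over the Newton segment. -/
noncomputable def edgePolynomial (a : ℕ → ℕ → ℂ) (k l : ℕ) : Polynomial ℂ :=
  ∑ mn ∈ newtonEdge k l, Polynomial.monomial (mn.1 + (l - mn.2)) (a mn.1 mn.2)

theorem mem_newtonEdge (hk : 0 < k) (hl : 0 < l) {mn : ℕ × ℕ} :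
    mn ∈ newtonEdge k l ↔ l * mn.1 + k * mn.2 = k * l := by
  simp only [newtonEdge, Finset.mem_filter, Finset.mem_product, Finset.mem_range,
    Nat.lt_succ_iff, and_iff_right_iff_imp]
  intro h
  exact ⟨Nat.le_of_mul_le_mul_left ((Nat.le_add_right _ _).trans_eq (h.trans (mul_comm k l))) hl,
    Nat.le_of_mul_le_mul_left ((Nat.le_add_left _ _).trans_eq h) hk⟩

theorem card_newtonEdge_le (hk : 0 < k) (hl : 0 < l) : (newtonEdge k l).card ≤ k + 1 := by
  rw [← Finset.card_range (k + 1)]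
  refine Finset.card_le_card_of_injOn Prod.fst
    (fun mn hmn => (Finset.mem_product.1 (Finset.mem_filter.1 hmn).1).1) fun mn hmn mn' hmn' h => ?_
  have hmul : k * mn.2 = k * mn'.2 := by
    have := (mem_newtonEdge hk hl).1 hmn
    have := (mem_newtonEdge hk hl).1 hmn'
    rw [h] at *
    omega
  exact Prod.ext h (Nat.eq_of_mul_eq_mul_left hk hmul)

theorem card_support_edgePolynomial_le (hk : 0 < k) (hl : 0 < l) :
    (edgePolynomial a k l).support.card ≤ k + 1 := by
  classical
  have hsub : (edgePolynomial a k l).support ⊆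
      (newtonEdge k l).image fun mn => mn.1 + (l - mn.2) := by
    intro d hd
    rw [Polynomial.mem_support_iff, edgePolynomial, Polynomial.finsetSum_coeff] at hd
    obtain ⟨mn, hmn, hne⟩ := Finset.exists_ne_zero_of_sum_ne_zero hd
    rw [Polynomial.coeff_monomial] at hne
    exact Finset.mem_image.2 ⟨mn, hmn, (ite_ne_right_iff.1 hne).1⟩
  exact (Finset.card_le_card hsub).trans (Finset.card_image_le.trans (card_newtonEdge_le hk hl))

theorem HasNewtonSegment.edgePolynomial_ne_zero (ha : HasNewtonSegment a k l) :
    edgePolynomial a k l ≠ 0 := by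
  intro h
  have hcoeff : (edgePolynomial a k l).coeff (k + l) = a k 0 := by
    rw [edgePolynomial, Polynomial.finsetSum_coeff, Finset.sum_eq_single (k, 0)]
    · simp
    · intro mn hmn hne
      refine Polynomial.coeff_monomial_of_ne _ fun heq => hne ?_
      simp only [newtonEdge, Finset.mem_filter, Finset.mem_product, Finset.mem_range] at hmn
      exact Prod.ext (by simp only; omega) (by simp only; omega)
    · exact fun h => absurd ((mem_newtonEdge ha.pos_left ha.pos_right).2 (by ring)) h
  exact ha.left_ne_zero (by simpa [h] using hcoeff.symm)

theorem HasNewtonSegment.rescaledSeries_zero_eq_sum (ha : HasNewtonSegment a k l) (p q : ℂ) :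
    rescaledSeries a k l 0 p q =
      ∑ mn ∈ newtonEdge k l, a mn.1 mn.2 * p ^ mn.1 * q ^ mn.2 := by
  rw [rescaledSeries, tsum_eq_sum (s := newtonEdge k l)]
  · refine Finset.sum_congr rfl fun mn hmn => ?_
    simp [(mem_newtonEdge ha.pos_left ha.pos_right).1 hmn]
  · intro mn hmn
    rw [mem_newtonEdge ha.pos_left ha.pos_right] at hmn
    rcases lt_or_gt_of_ne hmn with h | h
    · simp [ha.eq_zero_of_lt h]
    · simp [zero_pow (Nat.sub_ne_zero_of_lt h)]

theorem HasNewtonSegment.rescaledSeries_zero_one_zero (ha : HasNewtonSegment a k l) :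
    rescaledSeries a k l 0 1 0 = a k 0 := by
  have hmem : (k, 0) ∈ newtonEdge k l := (mem_newtonEdge ha.pos_left ha.pos_right).2 (by ring)
  rw [ha.rescaledSeries_zero_eq_sum, Finset.sum_eq_single_of_mem _ hmem]
  · simp
  · rintro ⟨m, n⟩ hmn hne
    have hn : n ≠ 0 := by
      rintro rfl
      have := (mem_newtonEdge ha.pos_left ha.pos_right).1 hmn
      exact hne (by rw [Nat.eq_of_mul_eq_mul_left ha.pos_right (by linarith : l * m = l * k)])
    simp [hn]

theorem HasNewtonSegment.rescaledSeries_zero_inv (ha : HasNewtonSegment a k l) {ξ : ℂ}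
    (hξ : ξ ≠ 0) :
    rescaledSeries a k l 0 ξ ξ⁻¹ = (ξ ^ l)⁻¹ * (edgePolynomial a k l).eval ξ := by
  rw [ha.rescaledSeries_zero_eq_sum, edgePolynomial, Polynomial.eval_finsetSum, Finset.mul_sum]
  refine Finset.sum_congr rfl fun mn hmn => ?_
  have hn : mn.2 ≤ l := by
    simpa [Nat.lt_succ_iff] using (Finset.mem_product.1 (Finset.mem_filter.1 hmn).1).2
  rw [Polynomial.eval_monomial, pow_add, pow_sub₀ _ hξ hn, inv_pow]
  field_simp

theorem HasNewtonSegment.exists_analyticOrderAt_rescaledSeries_eq (ha : HasNewtonSegment a k l)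
    {ξ₀ : ℂ} (hξ₀ : ξ₀ ≠ 0) :
    ∃ j ≤ k, analyticOrderAt (fun ξ => rescaledSeries a k l 0 ξ ξ⁻¹) ξ₀ = j := by
  refine ⟨(edgePolynomial a k l).rootMultiplicity ξ₀, Nat.lt_succ_iff.1 <|
    (rootMultiplicity_lt_card_support hξ₀ ha.edgePolynomial_ne_zero).trans_le
      (card_support_edgePolynomial_le ha.pos_left ha.pos_right), ?_⟩
  have hfactor : (fun ξ => rescaledSeries a k l 0 ξ ξ⁻¹) =ᶠ[𝓝 ξ₀]
      (fun ξ => (ξ ^ l)⁻¹) * fun ξ => (edgePolynomial a k l).eval ξ :=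
    (isOpen_ne.eventually_mem hξ₀).mono fun ξ hξ => ha.rescaledSeries_zero_inv hξ
  have hpow : AnalyticAt ℂ (fun ξ : ℂ => (ξ ^ l)⁻¹) ξ₀ := by fun_prop (disch := simp [hξ₀])
  rw [analyticOrderAt_congr hfactor, analyticOrderAt_mul hpow
    (AnalyticOnNhd.eval_polynomial _ ξ₀ trivial), hpow.analyticOrderAt_eq_zero.2 (by simp [hξ₀]),
    zero_add, analyticOrderAt_polynomial_eval ha.edgePolynomial_ne_zero]

/-! ### Lower bounds near the axes, and the transition region -/

theorem HasDoubleSeriesOn.exists_eventually_le_norm_near_left_axis (hF : HasDoubleSeriesOn F a R)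
    (hR : 0 < R) (ha : HasNewtonSegment a k l) :
    ∃ σ > 0, ∃ δ > 0, ∀ᶠ v : ℂ × ℂ in 𝓝 0,
      ‖v.2‖ ^ l < σ * ‖v.1‖ ^ k → δ * ‖v.1‖ ^ k ≤ ‖F v.1 v.2‖ := by
  have hak : 0 < ‖a k 0‖ := norm_pos_iff.2 ha.left_ne_zero
  have hT : ∀ᶠ w : ℂ × ℂ in 𝓝 0, ‖a k 0‖ / 2 < ‖rescaledSeries a k l w.1 1 w.2‖ := by
    refine (ContinuousAt.comp (f := fun w : ℂ × ℂ => (w.1, (1 : ℂ), w.2)) (x := 0)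
      (hF.continuousAt_rescaledSeries hR ha 1 0)
      (by fun_prop)).norm.tendsto.eventually_const_lt ?_
    simpa [ha.rescaledSeries_zero_one_zero] using hak
  have hdom : ∀ᶠ w : ℂ × ℂ in 𝓝 0, ‖w.1 ^ l * 1‖ < R ∧ ‖w.1 ^ k * w.2‖ < R := by
    refine (ContinuousAt.eventually_lt (by fun_prop) continuousAt_const ?_).and
      (ContinuousAt.eventually_lt (by fun_prop) continuousAt_const ?_) <;>
    simpa [ha.pos_right.ne'] using hR
  obtain ⟨ε, hε, hball⟩ := Metric.eventually_nhds_iff_ball.1 (hT.and hdom)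
  refine ⟨ε ^ l, by positivity, ‖a k 0‖ / 2, by positivity, ?_⟩
  have hsmall : ∀ᶠ v : ℂ × ℂ in 𝓝 0, ‖v.1‖ < ε ^ l :=
    ContinuousAt.eventually_lt (by fun_prop) continuousAt_const (by simpa using pow_pos hε l)
  filter_upwards [hsmall] with ⟨x, y⟩ hx hy
  obtain ⟨u, rfl⟩ := IsAlgClosed.exists_pow_nat_eq x ha.pos_right
  simp only [norm_pow] at hx hy ⊢
  have hu₀ : u ≠ 0 := by
    rintro rfl
    simp [ha.pos_left.ne', ha.pos_right.ne', not_lt.2 (pow_nonneg (norm_nonneg y) l)] at hy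
  obtain ⟨q, rfl⟩ : ∃ q, y = u ^ k * q := ⟨y / u ^ k, by field_simp⟩
  have hu : ‖u‖ < ε := lt_of_pow_lt_pow_left₀ l hε.le hx
  have hq : ‖q‖ < ε := by
    rw [norm_mul, norm_pow, mul_pow, pow_right_comm, mul_comm] at hy
    exact lt_of_pow_lt_pow_left₀ l hε.le (lt_of_mul_lt_mul_right hy (by positivity))
  obtain ⟨hTu, hdu⟩ := hball (u, q) (by simp [hu, hq])
  have hhom := hF.eq_pow_mul_rescaledSeries ha hdu.1 hdu.2
  rw [mul_one] at hhom
  rw [hhom, norm_mul, norm_pow, ← pow_mul, mul_comm l k, mul_comm]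
  gcongr

theorem HasDoubleSeriesOn.exists_eventually_le_norm_near_axes (hF : HasDoubleSeriesOn F a R)
    (hR : 0 < R) (ha : HasNewtonSegment a k l) :
    ∃ σ > 0, ∃ δ > 0, ∀ᶠ v : ℂ × ℂ in 𝓝 0,
      (‖v.2‖ ^ l < σ * ‖v.1‖ ^ k ∨ ‖v.1‖ ^ k < σ * ‖v.2‖ ^ l) →
        δ * max (‖v.1‖ ^ k) (‖v.2‖ ^ l) ≤ ‖F v.1 v.2‖ := by
  obtain ⟨σ₁, hσ₁, δ₁, hδ₁, h₁⟩ := hF.exists_eventually_le_norm_near_left_axis hR ha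
  obtain ⟨σ₂, hσ₂, δ₂, hδ₂, h₂⟩ := hF.swap.exists_eventually_le_norm_near_left_axis hR ha.swap
  refine ⟨min 1 (min σ₁ σ₂), by positivity, min δ₁ δ₂, by positivity, ?_⟩
  filter_upwards [h₁, (continuous_swap.tendsto' (0 : ℂ × ℂ) 0 rfl).eventually h₂]
    with ⟨x, y⟩ h₁ h₂ hxy
  have hσ : ∀ {σ A B : ℝ}, 0 ≤ B → min 1 (min σ₁ σ₂) ≤ σ → A < min 1 (min σ₁ σ₂) * B → A < σ * B :=
    fun hB hσ h => h.trans_le (mul_le_mul_of_nonneg_right hσ hB)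
  rcases hxy with hxy | hxy
  · have hmax := hσ (by positivity) (min_le_left _ _) hxy
    rw [max_eq_left (by linarith)]
    exact (mul_le_mul_of_nonneg_right (min_le_left _ _) (by positivity)).trans
      (h₁ (hσ (by positivity) ((min_le_right _ _).trans (min_le_left _ _)) hxy))
  · have hmax := hσ (by positivity) (min_le_left _ _) hxy
    rw [max_eq_right (by linarith)]
    exact (mul_le_mul_of_nonneg_right (min_le_right _ _) (by positivity)).trans
      (h₂ (hσ (by positivity) ((min_le_right _ _).trans (min_le_right _ _)) hxy))

/-- The points `x` for which the two coordinates of `(x, y)`, `y = t / x`, satisfy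
`σ |y|^l ≤ |x|^k ≤ σ⁻¹ |y|^l`; written without division so that it is closed. -/
def transitionRegion (k l : ℕ) (σ : ℝ) (t : ℂ) : Set ℂ :=
  {x | σ * ‖t‖ ^ l ≤ ‖x‖ ^ (k + l) ∧ ‖x‖ ^ (k + l) ≤ σ⁻¹ * ‖t‖ ^ l}

theorem isClosed_transitionRegion (k l : ℕ) (σ : ℝ) (t : ℂ) :
    IsClosed (transitionRegion k l σ t) :=
  have hcont : Continuous fun x : ℂ => ‖x‖ ^ (k + l) := by fun_prop
  (isClosed_le continuous_const hcont).inter (isClosed_le hcont continuous_const)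

theorem isCompact_transitionRegion (hkl : k + l ≠ 0) (σ : ℝ) (t : ℂ) :
    IsCompact (transitionRegion k l σ t) := by
  refine Metric.isCompact_of_isClosed_isBounded (isClosed_transitionRegion k l σ t) ?_
  have hlim : Tendsto (fun x : ℂ => ‖x‖ ^ (k + l)) (Bornology.cobounded ℂ) atTop :=
    (tendsto_pow_atTop hkl).comp tendsto_norm_cobounded_atTop
  exact Bornology.isBounded_def.2 <| (hlim.eventually_gt_atTop (σ⁻¹ * ‖t‖ ^ l)).mono
    fun x hx h => hx.not_ge h.2

theorem zero_notMem_transitionRegion (hkl : k + l ≠ 0) {σ : ℝ} (hσ : 0 < σ) {t : ℂ} (ht : t ≠ 0) :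
    (0 : ℂ) ∉ transitionRegion k l σ t := fun h => by
  have hpos : 0 < σ * ‖t‖ ^ l := by positivity
  have hnonpos := h.1
  rw [norm_zero, zero_pow hkl] at hnonpos
  exact hnonpos.not_gt hpos

theorem pow_mul_mem_transitionRegion_iff {σ : ℝ} {u ξ : ℂ} (hu : u ≠ 0) :
    u ^ l * ξ ∈ transitionRegion k l σ (u ^ (k + l)) ↔ ξ ∈ transitionRegion k l σ 1 := by
  have hpos : 0 < ‖u‖ ^ (l * (k + l)) := by positivity
  have hx : ‖u ^ l * ξ‖ ^ (k + l) = ‖u‖ ^ (l * (k + l)) * ‖ξ‖ ^ (k + l) := by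
    rw [norm_mul, norm_pow, mul_pow, ← pow_mul]
  have ht : ‖u ^ (k + l)‖ ^ l = ‖u‖ ^ (l * (k + l)) := by rw [norm_pow, ← pow_mul, mul_comm l]
  simp only [transitionRegion, Set.mem_ofPred_eq, hx, ht, norm_one, one_pow, mul_one]
  rw [mul_comm σ, mul_comm σ⁻¹, mul_le_mul_iff_right₀ hpos, mul_le_mul_iff_right₀ hpos]

theorem transitionRegion_pow {σ : ℝ} {u : ℂ} (hu : u ≠ 0) :
    transitionRegion k l σ (u ^ (k + l)) = (u ^ l * ·) '' transitionRegion k l σ 1 := by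
  refine Subset.antisymm (fun x hx => ?_)
    (image_subset_iff.2 fun ξ => (pow_mul_mem_transitionRegion_iff hu).2)
  have hxu : u ^ l * (x / u ^ l) = x := mul_div_cancel₀ x (pow_ne_zero l hu)
  exact ⟨x / u ^ l, (pow_mul_mem_transitionRegion_iff hu).1 (hxu.symm ▸ hx), hxu⟩

theorem lt_or_lt_of_notMem_transitionRegion {σ : ℝ} (hσ : 0 < σ) {t x : ℂ} (hx : x ≠ 0)
    (h : x ∉ transitionRegion k l σ t) :
    ‖t / x‖ ^ l < σ * ‖x‖ ^ k ∨ ‖x‖ ^ k < σ * ‖t / x‖ ^ l := by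
  have ht : ‖t‖ ^ l = ‖t / x‖ ^ l * ‖x‖ ^ l := by rw [← mul_pow, ← norm_mul, div_mul_cancel₀ _ hx]
  contrapose! h
  refine ⟨?_, ?_⟩ <;> rw [ht, pow_add, ← mul_assoc] <;> gcongr
  exacts [h.2, (le_inv_mul_iff₀ hσ).2 h.1]

theorem HasDoubleSeriesOn.setLIntegral_image_pow_mul_norm_rpow_neg (hF : HasDoubleSeriesOn F a R)
    (ha : HasNewtonSegment a k l) (c : ℝ) {u : ℂ} (hu : u ≠ 0) {K : Set ℂ} (hK : MeasurableSet K)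
    (hK₀ : 0 ∉ K) (hKl : ∀ ξ ∈ K, ‖u ^ l * ξ‖ < R) (hKk : ∀ ξ ∈ K, ‖u ^ k * ξ⁻¹‖ < R) :
    ∫⁻ x in (u ^ l * ·) '' K, ENNReal.ofReal (‖F x (u ^ (k + l) / x)‖ ^ (-(2 * c))) =
      ENNReal.ofReal (‖u‖ ^ (2 * l * (1 - c * k))) *
        ∫⁻ ξ in K, ENNReal.ofReal (‖rescaledSeries a k l u ξ ξ⁻¹‖ ^ (-(2 * c))) := by
  have hu₀ : 0 < ‖u‖ := norm_pos_iff.2 hu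
  rw [lintegral_image_eq_lintegral_norm_deriv_sq_mul hK (f' := fun _ => u ^ l)
    (fun ξ _ => by simpa using (hasDerivAt_id ξ).const_mul (u ^ l))
    (mul_right_injective₀ (pow_ne_zero l hu)).injOn,
    ← lintegral_const_mul' _ _ ENNReal.ofReal_ne_top]
  refine setLIntegral_congr_fun hK fun ξ hξ => ?_
  have hξ₀ : ξ ≠ 0 := ne_of_mem_of_not_mem hξ hK₀
  have hy : u ^ (k + l) / (u ^ l * ξ) = u ^ k * ξ⁻¹ := by rw [pow_add]; field_simp
  have hexp : ‖u ^ l‖ ^ 2 * ‖u ^ (k * l)‖ ^ (-(2 * c)) = ‖u‖ ^ (2 * l * (1 - c * k)) := by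
    rw [norm_pow, norm_pow, ← pow_mul, ← Real.rpow_natCast, ← Real.rpow_natCast,
      ← Real.rpow_mul hu₀.le, ← Real.rpow_add hu₀]
    congr 1
    push_cast
    ring
  rw [hy, hF.eq_pow_mul_rescaledSeries ha (hKl ξ hξ) (hKk ξ hξ), norm_mul,
    Real.mul_rpow (norm_nonneg _) (norm_nonneg _), ← ENNReal.ofReal_mul (by positivity),
    ← ENNReal.ofReal_mul (by positivity), ← mul_assoc, hexp]

theorem HasDoubleSeriesOn.exists_eventually_setLIntegral_rescaledSeries_le
    (hF : HasDoubleSeriesOn F a R) (hR : 0 < R) (ha : HasNewtonSegment a k l) {c : ℝ} (hc : 0 < c)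
    (hck : c * k < 1) {K : Set ℂ} (hK : IsCompact K) (hK₀ : 0 ∉ K) :
    ∃ M ≠ (⊤ : ℝ≥0∞), ∀ᶠ u in 𝓝 (0 : ℂ),
      ∫⁻ ξ in K, ENNReal.ofReal (‖rescaledSeries a k l u ξ ξ⁻¹‖ ^ (-(2 * c))) ≤ M := by
  obtain ⟨P, hP, hKP⟩ := exists_subset_openAnnulus_of_isCompact hK hK₀
  have hP₀ : openAnnulus P⁻¹ P ⊆ {0}ᶜ := fun ξ hξ =>
    norm_pos_iff.1 ((inv_pos.2 hP).trans hξ.1)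
  refine exists_eventually_setLIntegral_norm_rpow_neg_le (isOpen_openAnnulus P⁻¹ P)
    (hF.eventually_differentiableOn_rescaledSeries hR ha hP)
    ((hF.tendstoLocallyUniformlyOn_rescaledSeries hR ha).mono hP₀) hK hKP (by positivity)
    fun ξ hξ => ?_
  obtain ⟨j, hjk, hj⟩ := ha.exists_analyticOrderAt_rescaledSeries_eq (hP₀ (hKP hξ))
  have hcj : c * j ≤ c * k := by gcongr
  exact ⟨j, hj, by linarith⟩

theorem HasDoubleSeriesOn.exists_eventually_setLIntegral_transitionRegion_le
    (hF : HasDoubleSeriesOn F a R) (hR : 0 < R) (ha : HasNewtonSegment a k l) {c : ℝ} (hc : 0 < c)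
    (hck : c * k < 1) {σ : ℝ} (hσ : 0 < σ) :
    ∃ M ≠ (⊤ : ℝ≥0∞), ∀ᶠ u in 𝓝[≠] (0 : ℂ), ∫⁻ x in transitionRegion k l σ (u ^ (k + l)),
      ENNReal.ofReal (‖F x (u ^ (k + l) / x)‖ ^ (-(2 * c))) ≤
        ENNReal.ofReal (‖u‖ ^ (2 * l * (1 - c * k))) * M := by
  have hkl : k + l ≠ 0 := by have := ha.pos_left; omega
  have hK := isCompact_transitionRegion hkl σ 1
  have hK₀ := zero_notMem_transitionRegion hkl hσ one_ne_zero
  obtain ⟨P, hP, hKP⟩ := exists_subset_openAnnulus_of_isCompact hK hK₀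
  obtain ⟨M, hM, hMu⟩ :=
    hF.exists_eventually_setLIntegral_rescaledSeries_le hR ha hc hck hK hK₀
  refine ⟨M, hM, ?_⟩
  filter_upwards [nhdsWithin_le_nhds hMu, self_mem_nhdsWithin,
    nhdsWithin_le_nhds (eventually_norm_pow_mul_lt ha.pos_right.ne' P hR),
    nhdsWithin_le_nhds (eventually_norm_pow_mul_lt ha.pos_left.ne' P hR)] with u hu hu₀ hl hk
  rw [transitionRegion_pow hu₀, hF.setLIntegral_image_pow_mul_norm_rpow_neg ha c hu₀
    hK.measurableSet hK₀ (fun ξ hξ => ?_) fun ξ hξ => ?_]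
  · gcongr
  · rw [norm_mul, norm_pow]
    exact lt_of_le_of_lt (by gcongr; exact (hKP hξ).2.le) hl
  · rw [norm_mul, norm_pow, norm_inv]
    exact lt_of_le_of_lt (by gcongr; exact inv_le_of_inv_le₀ hP (hKP hξ).1.le) hk

theorem tendsto_nhdsNE_zero_of_comp_pow {β : Type*} {f : ℂ → β} {L : Filter β} {n : ℕ} (hn : n ≠ 0)
    (hf : Tendsto (fun u => f (u ^ n)) (𝓝[≠] 0) L) : Tendsto f (𝓝[≠] 0) L := by
  intro s hs
  obtain ⟨ε, hε, hball⟩ := Metric.mem_nhdsWithin_iff.1 (hf hs)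
  refine Metric.mem_nhdsWithin_iff.2 ⟨ε ^ n, pow_pos hε n, fun t ⟨htε, ht₀⟩ => ?_⟩
  obtain ⟨u, rfl⟩ := IsAlgClosed.exists_pow_nat_eq t (Nat.pos_of_ne_zero hn)
  rw [mem_ball_zero_iff, norm_pow] at htε
  exact hball ⟨mem_ball_zero_iff.2 (lt_of_pow_lt_pow_left₀ n hε.le htε),
    fun hu => ht₀ (by simp_all)⟩

theorem HasDoubleSeriesOn.tendsto_setLIntegral_transitionRegion (hF : HasDoubleSeriesOn F a R)
    (hR : 0 < R) (ha : HasNewtonSegment a k l) {c : ℝ} (hc : 0 < c) (hck : c * k < 1) {σ : ℝ}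
    (hσ : 0 < σ) :
    Tendsto (fun t => ∫⁻ x in transitionRegion k l σ t,
      ENNReal.ofReal (‖F x (t / x)‖ ^ (-(2 * c)))) (𝓝[≠] 0) (𝓝 0) := by
  obtain ⟨M, hM, hMu⟩ :=
    hF.exists_eventually_setLIntegral_transitionRegion_le hR ha hc hck hσ
  have hl : (0 : ℝ) < l := Nat.cast_pos.2 ha.pos_right
  have he : 0 < 2 * l * (1 - c * k) := mul_pos (by positivity) (by linarith)
  have hpow : Tendsto (fun u : ℂ => ‖u‖ ^ (2 * l * (1 - c * k))) (𝓝[≠] 0) (𝓝 0) := by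
    refine tendsto_nhdsWithin_of_tendsto_nhds ?_
    simpa [Real.zero_rpow he.ne'] using
      (continuous_norm.rpow_const fun _ => Or.inr he.le).tendsto (0 : ℂ)
  have hlim : Tendsto (fun u : ℂ => ENNReal.ofReal (‖u‖ ^ (2 * l * (1 - c * k))) * M)
      (𝓝[≠] 0) (𝓝 0) := by
    simpa using ENNReal.Tendsto.mul_const (ENNReal.tendsto_ofReal hpow) (Or.inr hM)
  exact tendsto_nhdsNE_zero_of_comp_pow (n := k + l) (by have := ha.pos_left; omega)
    (tendsto_of_tendsto_of_tendsto_of_le_of_le' tendsto_const_nhds hlim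
      (Eventually.of_forall fun _ => zero_le) hMu)

/-! ### Integrals over the fibers -/

/-- Off the transition region, and in the bidisc of radius `R`, the modulus of `F` is bounded below
by a multiple of the dominating one of `|x|^k` and `|y|^l`. -/
structure HasAxialLowerBound (F : ℂ → ℂ → ℂ) (k l : ℕ) (σ δ R : ℝ) : Prop where
  pos_ratio : 0 < σ
  pos_factor : 0 < δ
  le_norm : ∀ {x y : ℂ}, ‖x‖ < R → ‖y‖ < R →
    (‖y‖ ^ l < σ * ‖x‖ ^ k ∨ ‖x‖ ^ k < σ * ‖y‖ ^ l) → δ * max (‖x‖ ^ k) (‖y‖ ^ l) ≤ ‖F x y‖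

theorem HasAxialLowerBound.swap {σ δ : ℝ} (h : HasAxialLowerBound F k l σ δ R) :
    HasAxialLowerBound (Function.swap F) l k σ δ R where
  pos_ratio := h.pos_ratio
  pos_factor := h.pos_factor
  le_norm hx hy hxy := max_comm (_ : ℝ) _ ▸ h.le_norm hy hx hxy.symm

theorem HasDoubleSeriesOn.exists_hasAxialLowerBound (hF : HasDoubleSeriesOn F a R) (hR : 0 < R)
    (ha : HasNewtonSegment a k l) :
    ∃ R' > 0, R' ≤ R ∧ ∃ σ δ, HasAxialLowerBound F k l σ δ R' := by
  obtain ⟨σ, hσ, δ, hδ, h⟩ := hF.exists_eventually_le_norm_near_axes hR ha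
  obtain ⟨ε, hε, hball⟩ := Metric.eventually_nhds_iff_ball.1 h
  refine ⟨min ε R, lt_min hε hR, min_le_right _ _, σ, δ, hσ, hδ, fun {x y} hx hy => ?_⟩
  exact hball (x, y) (by simp_all)

theorem HasAxialLowerBound.norm_const_mul_pow_le_norm {σ δ : ℝ}
    (h : HasAxialLowerBound F k l σ δ R) {x y : ℂ} (hx : ‖x‖ < R) (hy : ‖y‖ < R)
    (hxy : ‖y‖ ^ l < σ * ‖x‖ ^ k ∨ ‖x‖ ^ k < σ * ‖y‖ ^ l) : ‖δ * x ^ k‖ ≤ ‖F x y‖ := by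
  rw [norm_mul, norm_pow, Complex.norm_real, Real.norm_of_nonneg h.pos_factor.le]
  exact (mul_le_mul_of_nonneg_left (le_max_left _ _) h.pos_factor.le).trans (h.le_norm hx hy hxy)

theorem HasAxialLowerBound.norm_const_mul_pow_le_norm_left_axis {σ δ : ℝ}
    (h : HasAxialLowerBound F k l σ δ R) (hl : 0 < l) {x : ℂ} (hx₀ : x ≠ 0) (hx : ‖x‖ < R) :
    ‖δ * x ^ k‖ ≤ ‖F x 0‖ := by
  have hσ := h.pos_ratio
  refine h.norm_const_mul_pow_le_norm hx (norm_zero.trans_lt ((norm_nonneg x).trans_lt hx))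
    (Or.inl ?_)
  rw [norm_zero, zero_pow hl.ne']
  positivity

theorem HasAxialLowerBound.norm_const_mul_pow_pos {σ δ : ℝ} (h : HasAxialLowerBound F k l σ δ R)
    {x : ℂ} (hx₀ : x ≠ 0) : 0 < ‖δ * x ^ k‖ :=
  norm_pos_iff.2 (mul_ne_zero (Complex.ofReal_ne_zero.2 h.pos_factor.ne') (pow_ne_zero k hx₀))

theorem setLIntegral_norm_const_mul_pow_rpow_neg_ne_top {s : Set ℂ} (hs : Bornology.IsBounded s)
    {δ : ℂ} (hδ : δ ≠ 0) {p : ℝ} (hp : 0 < p) (hpk : p * k < 2) :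
    ∫⁻ x in s, ENNReal.ofReal (‖δ * x ^ k‖ ^ (-p)) ≠ ⊤ := by
  have hdiff : Differentiable ℂ fun x : ℂ => δ * x ^ k := by fun_prop
  have hord (z : ℂ) : ∃ j : ℕ, analyticOrderAt (fun x => δ * x ^ k) z = j ∧ p * j < 2 := by
    rcases eq_or_ne z 0 with rfl | hz
    · refine ⟨k, (hdiff.analyticAt 0).analyticOrderAt_eq_natCast.2 ?_, hpk⟩
      exact ⟨fun _ => δ, analyticAt_const, hδ, by simp [mul_comm]⟩
    · refine ⟨0, ?_, by simp⟩
      exact (hdiff.analyticAt z).analyticOrderAt_eq_zero.2 (mul_ne_zero hδ (pow_ne_zero k hz))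
  obtain ⟨M, hM, h⟩ := exists_eventually_setLIntegral_norm_rpow_neg_le
    (l := 𝓝 (0 : ℂ)) (f := fun _ x => δ * x ^ k) isOpen_univ
    (Eventually.of_forall fun _ => hdiff.differentiableOn)
    (tendstoLocallyUniformlyOn_of_continuousAt_uncurry fun x _ => by fun_prop)
    hs.isCompact_closure (subset_univ _) hp fun z _ => hord z
  exact ne_top_of_le_ne_top hM ((lintegral_mono_set subset_closure).trans h.self_of_nhds)

/-- The projection of the fiber `{xy = t, |x| < R, |y| < R}` to the `x`-axis; the origin is left out
when `t = 0`. -/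
def fiberShadow (R : ℝ) (t : ℂ) : Set ℂ := openAnnulus (‖t‖ / R) R

/-- The integral of `|F|^{-2c}` over the fiber of `xy` over `t` with respect to the area of its
projection to the `x`-axis. -/
noncomputable def shadowIntegral (F : ℂ → ℂ → ℂ) (c R : ℝ) (t : ℂ) : ℝ≥0∞ :=
  ∫⁻ x in fiberShadow R t, ENNReal.ofReal (‖F x (t / x)‖ ^ (-(2 * c)))

theorem mem_fiberShadow (hR : 0 < R) {t x : ℂ} :
    x ∈ fiberShadow R t ↔ x ≠ 0 ∧ ‖x‖ < R ∧ ‖t / x‖ < R := by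
  have hlt (hx : x ≠ 0) : ‖t‖ / R < ‖x‖ ↔ ‖t / x‖ < R := by
    rw [norm_div, div_lt_comm₀ hR (norm_pos_iff.2 hx)]
  constructor
  · rintro ⟨ht, hx⟩
    have hx₀ : x ≠ 0 := norm_pos_iff.1 ((by positivity : 0 ≤ ‖t‖ / R).trans_lt ht)
    exact ⟨hx₀, hx, (hlt hx₀).1 ht⟩
  · rintro ⟨hx₀, hx, ht⟩
    exact ⟨(hlt hx₀).2 ht, hx⟩

theorem measurableSet_fiberShadow (R : ℝ) (t : ℂ) : MeasurableSet (fiberShadow R t) :=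
  (isOpen_openAnnulus _ _).measurableSet

theorem fiberShadow_subset_fiberShadow_zero (hR : 0 < R) (t : ℂ) :
    fiberShadow R t ⊆ fiberShadow R 0 := fun x hx => by
  rw [mem_fiberShadow hR] at hx ⊢
  exact ⟨hx.1, hx.2.1, by simpa using hR⟩

theorem image_div_fiberShadow (hR : 0 < R) {t : ℂ} (ht : t ≠ 0) :
    (t / ·) '' fiberShadow R t = fiberShadow R t := by
  have hmaps : MapsTo (t / ·) (fiberShadow R t) (fiberShadow R t) := fun x hx => by
    rw [mem_fiberShadow hR] at hx ⊢
    exact ⟨div_ne_zero ht hx.1, hx.2.2, by rw [div_div_cancel₀ ht]; exact hx.2.1⟩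
  exact hmaps.image_subset.antisymm fun x hx => ⟨t / x, hmaps hx, div_div_cancel₀ ht⟩

theorem HasDoubleSeriesOn.aemeasurable_ofReal_norm_rpow_neg (hF : HasDoubleSeriesOn F a R)
    (hR : 0 < R) (c : ℝ) (t : ℂ) :
    AEMeasurable (fun x => ENNReal.ofReal (‖F x (t / x)‖ ^ (-(2 * c))))
      (volume.restrict (fiberShadow R t)) := by
  have hcont : ContinuousOn (fun x => F x (t / x)) (fiberShadow R t) := fun x hx => by
    obtain ⟨hx₀, hx, hy⟩ := (mem_fiberShadow hR).1 hx
    exact (ContinuousAt.comp (f := fun x => (x, t / x)) (hF.continuousAt hx hy)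
      (by fun_prop (disch := assumption))).continuousWithinAt
  exact ((hcont.aemeasurable (measurableSet_fiberShadow R t)).norm.pow_const _).ennreal_ofReal

theorem HasAxialLowerBound.setLIntegral_fiberShadow_ne_top {σ δ : ℝ}
    (h : HasAxialLowerBound F k l σ δ R) {c : ℝ} (hc : 0 < c) (hck : c * k < 1) (t : ℂ) :
    ∫⁻ x in fiberShadow R t, ENNReal.ofReal (‖δ * x ^ k‖ ^ (-(2 * c))) ≠ ⊤ :=
  setLIntegral_norm_const_mul_pow_rpow_neg_ne_top
    (isBounded_ball.subset fun _ hx => mem_ball_zero_iff.2 hx.2)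
    (Complex.ofReal_ne_zero.2 h.pos_factor.ne') (by positivity) (by linarith)

theorem HasAxialLowerBound.shadowIntegral_zero_ne_top {σ δ : ℝ}
    (h : HasAxialLowerBound F k l σ δ R) (hR : 0 < R) (hl : 0 < l) {c : ℝ} (hc : 0 < c)
    (hck : c * k < 1) : shadowIntegral F c R 0 ≠ ⊤ := by
  refine ne_top_of_le_ne_top (h.setLIntegral_fiberShadow_ne_top hc hck 0)
    (setLIntegral_mono' (measurableSet_fiberShadow R 0) fun x hx => ?_)
  obtain ⟨hx₀, hxR, -⟩ := (mem_fiberShadow hR).1 hx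
  rw [zero_div]
  exact ENNReal.ofReal_le_ofReal <| Real.rpow_le_rpow_of_nonpos (h.norm_const_mul_pow_pos hx₀)
    (h.norm_const_mul_pow_le_norm_left_axis hl hx₀ hxR) (by linarith)

theorem eventually_mem_fiberShadow_sdiff_transitionRegion (hl : 0 < l) (σ : ℝ) {x : ℂ}
    (hx : x ∈ fiberShadow R 0) :
    ∀ᶠ t in 𝓝 (0 : ℂ), x ∈ fiberShadow R t \ transitionRegion k l σ t := by
  have hx₀ : 0 < ‖x‖ := by simpa using hx.1
  have hD : ∀ᶠ t in 𝓝 (0 : ℂ), ‖t‖ / R < ‖x‖ :=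
    ContinuousAt.eventually_lt (by fun_prop) continuousAt_const (by simpa using hx₀)
  have hT : ∀ᶠ t in 𝓝 (0 : ℂ), σ⁻¹ * ‖t‖ ^ l < ‖x‖ ^ (k + l) := by
    refine ContinuousAt.eventually_lt (by fun_prop) continuousAt_const ?_
    rw [norm_zero, zero_pow hl.ne', mul_zero]
    positivity
  filter_upwards [hD, hT] with t hDt hTt
  exact ⟨⟨hDt, hx.2⟩, fun h => hTt.not_ge h.2⟩

theorem HasDoubleSeriesOn.tendsto_setLIntegral_fiberShadow_sdiff_transitionRegion
    (hF : HasDoubleSeriesOn F a R) (hR : 0 < R) (hl : 0 < l) {σ δ : ℝ}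
    (h : HasAxialLowerBound F k l σ δ R) {c : ℝ} (hc : 0 < c) (hck : c * k < 1) :
    Tendsto (fun t => ∫⁻ x in fiberShadow R t \ transitionRegion k l σ t,
      ENNReal.ofReal (‖F x (t / x)‖ ^ (-(2 * c)))) (𝓝 0) (𝓝 (shadowIntegral F c R 0)) := by
  set D := fun t => fiberShadow R t \ transitionRegion k l σ t
  set f := fun t x => ENNReal.ofReal (‖F x (t / x)‖ ^ (-(2 * c)))
  have hD (t) : MeasurableSet (D t) :=
    (measurableSet_fiberShadow R t).diff (isClosed_transitionRegion k l σ t).measurableSet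
  have hint (t) : ∫⁻ x in fiberShadow R 0, (D t).indicator (f t) x = ∫⁻ x in D t, f t x := by
    rw [setLIntegral_indicator (hD t), inter_eq_left.2
      (sdiff_subset.trans (fiberShadow_subset_fiberShadow_zero hR t))]
  refine Tendsto.congr hint <| tendsto_lintegral_filter_of_dominated_convergence'
    (fun x => ENNReal.ofReal (‖δ * x ^ k‖ ^ (-(2 * c)))) (Eventually.of_forall fun t => ?_)
    (Eventually.of_forall fun t => Eventually.of_forall fun x => ?_) ?_ ?_
  · have hmeas : AEMeasurable (f t) (volume.restrict (D t)) :=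
      (hF.aemeasurable_ofReal_norm_rpow_neg hR c t).mono_set sdiff_subset
    exact ((aemeasurable_indicator_iff (hD t)).2 hmeas).restrict
  · refine indicator_apply_le' (fun hx => ?_) fun _ => zero_le
    obtain ⟨hx₀, hxR, hy⟩ := (mem_fiberShadow hR).1 hx.1
    exact ENNReal.ofReal_le_ofReal <| Real.rpow_le_rpow_of_nonpos (h.norm_const_mul_pow_pos hx₀)
      (h.norm_const_mul_pow_le_norm hxR hy
        (lt_or_lt_of_notMem_transitionRegion h.pos_ratio hx₀ hx.2)) (by linarith)
  · exact h.setLIntegral_fiberShadow_ne_top hc hck 0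
  · refine (ae_restrict_iff' (measurableSet_fiberShadow R 0)).2 <|
      Eventually.of_forall fun x hx => ?_
    obtain ⟨hx₀, hxR, hy⟩ := (mem_fiberShadow hR).1 hx
    have hne : ‖F x (0 / x)‖ ≠ 0 := by
      rw [zero_div]
      exact ((h.norm_const_mul_pow_pos hx₀).trans_le
        (h.norm_const_mul_pow_le_norm_left_axis hl hx₀ hxR)).ne'
    refine Tendsto.congr' ((eventually_mem_fiberShadow_sdiff_transitionRegion hl σ hx).mono
      fun t ht => (indicator_of_mem ht (f t)).symm) (ENNReal.tendsto_ofReal ?_)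
    have hcont : ContinuousAt (fun t => F x (t / x)) 0 :=
      ContinuousAt.comp (f := fun t => (x, t / x)) (hF.continuousAt hxR hy) (by fun_prop)
    exact hcont.norm.rpow_const (Or.inl hne)

theorem HasDoubleSeriesOn.continuousAt_shadowIntegral (hF : HasDoubleSeriesOn F a R) (hR : 0 < R)
    (ha : HasNewtonSegment a k l) {σ δ : ℝ} (h : HasAxialLowerBound F k l σ δ R) {c : ℝ}
    (hc : 0 < c) (hck : c * k < 1) : ContinuousAt (shadowIntegral F c R) 0 := by
  rw [continuousAt_iff_punctured_nhds]
  have hoff := (hF.tendsto_setLIntegral_fiberShadow_sdiff_transitionRegion hR ha.pos_right h hc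
    hck).mono_left (nhdsWithin_le_nhds (s := {0}ᶜ))
  have hon : Tendsto (fun t => ∫⁻ x in fiberShadow R t ∩ transitionRegion k l σ t,
      ENNReal.ofReal (‖F x (t / x)‖ ^ (-(2 * c)))) (𝓝[≠] 0) (𝓝 0) :=
    tendsto_of_tendsto_of_tendsto_of_le_of_le tendsto_const_nhds
      (hF.tendsto_setLIntegral_transitionRegion hR ha hc hck h.pos_ratio)
      (fun _ => zero_le) fun _ => lintegral_mono_set inter_subset_right
  have hsum := hon.add hoff
  rw [zero_add] at hsum
  exact hsum.congr fun t =>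
    lintegral_inter_add_sdiff _ _ (isClosed_transitionRegion k l σ t).measurableSet

theorem shadowIntegral_swap (hR : 0 < R) {t : ℂ} (ht : t ≠ 0) (c : ℝ) :
    shadowIntegral (Function.swap F) c R t = ∫⁻ x in fiberShadow R t,
      ENNReal.ofReal (‖t‖ ^ 2 / ‖x‖ ^ 4) * ENNReal.ofReal (‖F x (t / x)‖ ^ (-(2 * c))) := by
  have hderiv (x) (hx : x ∈ fiberShadow R t) : HasDerivAt (t / ·) (-(t / x ^ 2)) x := by
    have hx₀ : x ≠ 0 := ((mem_fiberShadow hR).1 hx).1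
    simpa [div_eq_mul_inv] using (hasDerivAt_inv hx₀).const_mul t
  have hinj : InjOn (t / ·) (fiberShadow R t) := fun x _ y _ hxy => by
    rw [← div_div_cancel₀ (b := x) ht, ← div_div_cancel₀ (b := y) ht]
    exact congrArg (t / ·) hxy
  rw [shadowIntegral, ← image_div_fiberShadow hR ht, lintegral_image_eq_lintegral_norm_deriv_sq_mul
    (measurableSet_fiberShadow R t) hderiv hinj, image_div_fiberShadow hR ht]
  refine lintegral_congr fun x => ?_
  rw [div_div_cancel₀ ht, norm_neg, norm_div, norm_pow, div_pow, ← pow_mul, Function.swap]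

theorem HasDoubleSeriesOn.fiberIntegral_eq_shadowIntegral_add (hF : HasDoubleSeriesOn F a R)
    (hR : 0 < R) (c : ℝ) :
    fiberIntegral F c R = shadowIntegral F c R + shadowIntegral (Function.swap F) c R := by
  ext t
  rw [Pi.add_apply]
  rcases eq_or_ne t 0 with rfl | ht
  · simp [fiberIntegral, shadowIntegral, fiberShadow, openAnnulus, Function.swap]
  · rw [shadowIntegral_swap (F := F) hR ht, shadowIntegral,
      ← lintegral_add_left' (hF.aemeasurable_ofReal_norm_rpow_neg hR c t), fiberIntegral, if_neg ht]
    refine lintegral_congr fun x => ?_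
    rw [add_mul, one_mul, ENNReal.ofReal_add (by positivity) (by positivity),
      ENNReal.ofReal_mul (by positivity)]

end

/-- Stability of integrals along the fibers of `π(x,y) = xy` for an `F` whose Newton
polygon is the single segment joining `(k,0)` and `(0,l)`: for every
`0 < c < 1/max(k,l)` there is `R ∈ (0, R₀]` with `K_0(R) < ∞` and
`lim_{t→0} K_t(R) = K_0(R)`. -/
theorem stability_of_fiber_integrals_irreducible
    (R₀ : ℝ) (hR₀ : 0 < R₀) (a : ℕ → ℕ → ℂ) (F : ℂ → ℂ → ℂ)
    (hconv : ∀ x y : ℂ, ‖x‖ < R₀ → ‖y‖ < R₀ →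
      Summable (fun mn : ℕ × ℕ => ‖a mn.1 mn.2‖ * ‖x‖ ^ mn.1 * ‖y‖ ^ mn.2))
    (hF : ∀ x y : ℂ, ‖x‖ < R₀ → ‖y‖ < R₀ →
      F x y = ∑' mn : ℕ × ℕ, a mn.1 mn.2 * x ^ mn.1 * y ^ mn.2)
    (k l : ℕ) (hk : 0 < k) (hl : 0 < l)
    (hak : a k 0 ≠ 0) (hal : a 0 l ≠ 0)
    (hNewton : ∀ m n : ℕ, l * m + k * n < k * l → a m n = 0)
    (c : ℝ) (hc0 : 0 < c) (hc1 : c < 1 / (max k l : ℕ)) :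
    ∃ R : ℝ, 0 < R ∧ R ≤ R₀ ∧ fiberIntegral F c R 0 < ⊤ ∧
      Filter.Tendsto (fun t : ℂ => fiberIntegral F c R t)
        (nhdsWithin 0 {0}ᶜ) (nhds (fiberIntegral F c R 0)) := by
  have hseries₀ : HasDoubleSeriesOn F a R₀ := fun x y hx hy => by
    rw [hF x y hx hy]
    exact (Summable.of_norm <| by simpa using hconv x y hx hy).hasSum
  have hnewton : HasNewtonSegment a k l := ⟨hk, hl, hak, hal, fun h => hNewton _ _ h⟩
  have hcm : c * max (k : ℝ) l < 1 := by
    rw [Nat.cast_max] at hc1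
    exact (lt_div_iff₀ (by positivity)).1 hc1
  have hck : c * k < 1 := (mul_le_mul_of_nonneg_left (le_max_left _ _) hc0.le).trans_lt hcm
  have hcl : c * l < 1 := (mul_le_mul_of_nonneg_left (le_max_right _ _) hc0.le).trans_lt hcm
  obtain ⟨R, hR, hRR₀, σ, δ, hbound⟩ := hseries₀.exists_hasAxialLowerBound hR₀ hnewton
  have hseries := hseries₀.mono hRR₀
  refine ⟨R, hR, hRR₀, ?_⟩
  rw [hseries.fiberIntegral_eq_shadowIntegral_add hR c]
  exact ⟨(ENNReal.add_ne_top.2 ⟨hbound.shadowIntegral_zero_ne_top hR hl hc0 hck,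
      hbound.swap.shadowIntegral_zero_ne_top hR hk hc0 hcl⟩).lt_top,
    ((hseries.continuousAt_shadowIntegral hR hnewton hbound hc0 hck).add
      (hseries.swap.continuousAt_shadowIntegral hR hnewton.swap hbound.swap hc0 hcl)).mono_left
        nhdsWithin_le_nhds⟩
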